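/- Assume Π > 0 and Γ > 0 at every (x,y) ∈ U × (ℝⁿ∖{0}). Then the spray coefficients of the (α,β,γ)-metric F are related to those of α by G^i = ^αG^i + (α/Π)·[Ψ_s·^βs^i_0 + Ψ_s̄·^γs^i_0] + (1/(2Γ))·[Γ₁·b^i + Γ₂·γ^i + (1/Ψ)·Γ₃·α^i], where α^i = y^i/α, b^i = a^{ij}b_j, γ^i = a^{ij}γ_j, Γ₁ = [Ψ_ss + (g²−s̄²)J]·R^β + [Ψ_ss̄ − (θ−ss̄)J]·R^γ, Γ₂ = [Ψ_s̄s̄ + (b²−s²)J]·R^γ + [Ψ_ss̄ − (θ−ss̄)J]·R^β, Γ₃ = [ρ₁ + π₂(θ−ss̄) − π₁(g²−s̄²)]·R^β + [ρ̄₁ − π₂(b²−s²) + π₁(θ−ss̄)]·R^γ, R^β = ^βr_00 − (2α/Π)[Ψ_s·^βs_0 + Ψ_s̄·^γs̄_0], R^γ = ^γr_00 − (2α/Π)[Ψ_s·^βs̄_0 + Ψ_s̄·^γs_0]. -/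

import Mathlib

noncomputable section

open Set

/-- `a^{ij} u_i v_j` : the pairing of two covectors via the inverse matrix. -/
def quadInv {n : ℕ} (a : Matrix (Fin n) (Fin n) ℝ) (u v : Fin n → ℝ) : ℝ :=
  ∑ i, ∑ j, a⁻¹ i j * u i * v j

/-- `α(y) = √(a_{ij} y^i y^j)`. -/
def alph {n : ℕ} (a : Matrix (Fin n) (Fin n) ℝ) (y : Fin n → ℝ) : ℝ :=
  Real.sqrt (∑ i, ∑ j, a i j * y i * y j)

/-- `v_i y^i`. -/
def oneForm {n : ℕ} (v y : Fin n → ℝ) : ℝ := ∑ i, v i * y i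

/-- `s(y) = v_i y^i / α(y)`. -/
def sVar {n : ℕ} (a : Matrix (Fin n) (Fin n) ℝ) (v y : Fin n → ℝ) : ℝ :=
  oneForm v y / alph a y

/-- The (α,β,γ)-metric `F(y) = α·Ψ(s, s̄)`. -/
def Fm {n : ℕ} (a : Matrix (Fin n) (Fin n) ℝ) (bv gv : Fin n → ℝ)
    (Ψ : ℝ → ℝ → ℝ) (y : Fin n → ℝ) : ℝ :=
  alph a y * Ψ (sVar a bv y) (sVar a gv y)

/-- Partial derivative of a function on `ℝⁿ` in the `i`-th coordinate direction. -/
def pd {n : ℕ} (f : (Fin n → ℝ) → ℝ) (y : Fin n → ℝ) (i : Fin n) : ℝ :=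
  fderiv ℝ f y (Pi.single i 1)

/-- Second partial derivative. -/
def pd2 {n : ℕ} (f : (Fin n → ℝ) → ℝ) (y : Fin n → ℝ) (i j : Fin n) : ℝ :=
  pd (fun z => pd f z j) y i

/-- Partial derivative with respect to the first slot (`∂/∂s`). -/
def Ds (Ψ : ℝ → ℝ → ℝ) : ℝ → ℝ → ℝ := fun p q => deriv (fun u => Ψ u q) p

/-- Partial derivative with respect to the second slot (`∂/∂s̄`). -/
def Dt (Ψ : ℝ → ℝ → ℝ) : ℝ → ℝ → ℝ := fun p q => deriv (fun v => Ψ p v) q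

/-- `h_i = v_i − s·α_i`. -/
def hl {n : ℕ} (a : Matrix (Fin n) (Fin n) ℝ) (v y : Fin n → ℝ) (i : Fin n) : ℝ :=
  v i - sVar a v y * pd (alph a) y i

/-- Fundamental tensor `g_{ij} = ½ ∂²(F²)/∂yⁱ∂yʲ`. -/
def fundT {n : ℕ} (F : (Fin n → ℝ) → ℝ) (y : Fin n → ℝ) (i j : Fin n) : ℝ :=
  (1 / 2) * pd2 (fun z => F z ^ 2) y i j

/-- `Π = Ψ − sΨ_s − s̄Ψ_s̄`. -/
def PiF (Ψ : ℝ → ℝ → ℝ) (p q : ℝ) : ℝ := Ψ p q - p * Ds Ψ p q - q * Dt Ψ p q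

/-- `J = (Ψ_ss Ψ_s̄s̄ − Ψ_ss̄²)/Π`. -/
def JF (Ψ : ℝ → ℝ → ℝ) (p q : ℝ) : ℝ :=
  (Ds (Ds Ψ) p q * Dt (Dt Ψ) p q - Dt (Ds Ψ) p q ^ 2) / PiF Ψ p q

/-- `Γ`, with `B = b²`, `G = g²`, `Θ = θ` as real parameters. -/
def GammaF (Ψ : ℝ → ℝ → ℝ) (B G Θ p q : ℝ) : ℝ :=
  PiF Ψ p q + (B - p ^ 2) * Ds (Ds Ψ) p q + (G - q ^ 2) * Dt (Dt Ψ) p q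
    + 2 * (Θ - p * q) * Dt (Ds Ψ) p q
    + ((B - p ^ 2) * (G - q ^ 2) - (Θ - p * q) ^ 2) * JF Ψ p q

/-- `ρ = Ψ(Ψ − sΨ_s − s̄Ψ_s̄)`. -/
def rhoF (Ψ : ℝ → ℝ → ℝ) : ℝ → ℝ → ℝ := fun p q => Ψ p q * PiF Ψ p q

/-- `ρ₀ = ΨΨ_ss + Ψ_s²`. -/
def rho0F (Ψ : ℝ → ℝ → ℝ) : ℝ → ℝ → ℝ := fun p q => Ψ p q * Ds (Ds Ψ) p q + Ds Ψ p q ^ 2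

/-- `ρ̄₀ = ΨΨ_s̄s̄ + Ψ_s̄²`. -/
def rhobar0F (Ψ : ℝ → ℝ → ℝ) : ℝ → ℝ → ℝ := fun p q => Ψ p q * Dt (Dt Ψ) p q + Dt Ψ p q ^ 2

/-- `ρ₃ = ΨΨ_ss̄ + Ψ_sΨ_s̄`. -/
def rho3F (Ψ : ℝ → ℝ → ℝ) : ℝ → ℝ → ℝ :=
  fun p q => Ψ p q * Dt (Ds Ψ) p q + Ds Ψ p q * Dt Ψ p q

/-- `ρ₁ = ΨΨ_s − sρ₀ − s̄ρ₃`. -/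
def rho1F (Ψ : ℝ → ℝ → ℝ) : ℝ → ℝ → ℝ :=
  fun p q => Ψ p q * Ds Ψ p q - p * rho0F Ψ p q - q * rho3F Ψ p q

/-- `ρ̄₁ = ΨΨ_s̄ − s̄ρ̄₀ − sρ₃`. -/
def rhobar1F (Ψ : ℝ → ℝ → ℝ) : ℝ → ℝ → ℝ :=
  fun p q => Ψ p q * Dt Ψ p q - q * rhobar0F Ψ p q - p * rho3F Ψ p q

/-- `ρ₂ = −sρ₁ − s̄ρ̄₁`. -/
def rho2F (Ψ : ℝ → ℝ → ℝ) : ℝ → ℝ → ℝ :=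
  fun p q => -p * rho1F Ψ p q - q * rhobar1F Ψ p q

/-- `π₁ = Ψ_s̄Ψ_ss̄ − Ψ_sΨ_s̄s̄ + sΨJ`. -/
def pi1F (Ψ : ℝ → ℝ → ℝ) (p q : ℝ) : ℝ :=
  Dt Ψ p q * Dt (Ds Ψ) p q - Ds Ψ p q * Dt (Dt Ψ) p q + p * Ψ p q * JF Ψ p q

/-- `π₂ = Ψ_sΨ_ss̄ − Ψ_s̄Ψ_ss + s̄ΨJ`. -/
def pi2F (Ψ : ℝ → ℝ → ℝ) (p q : ℝ) : ℝ :=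
  Ds Ψ p q * Dt (Ds Ψ) p q - Dt Ψ p q * Ds (Ds Ψ) p q + q * Ψ p q * JF Ψ p q


/-- Christoffel symbols `Γ^k_{ij}` of the Riemannian metric `a_{ij}(x)`. -/
def chr {n : ℕ} (a : (Fin n → ℝ) → Matrix (Fin n) (Fin n) ℝ) (x : Fin n → ℝ)
    (k i j : Fin n) : ℝ :=
  (1 / 2) * ∑ l, (a x)⁻¹ k l *
    (pd (fun z => a z j l) x i + pd (fun z => a z i l) x j - pd (fun z => a z i j) x l)

/-- Geodesic coefficients `^αG^i = ½ Γ^i_{jk} y^j y^k` of `α`. -/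
def alphaG {n : ℕ} (a : (Fin n → ℝ) → Matrix (Fin n) (Fin n) ℝ) (x y : Fin n → ℝ)
    (i : Fin n) : ℝ :=
  (1 / 2) * ∑ j, ∑ k, chr a x i j k * y j * y k

/-- Covariant derivative `v_{i|j}` of a 1-form `v` with respect to `α`. -/
def covD {n : ℕ} (a : (Fin n → ℝ) → Matrix (Fin n) (Fin n) ℝ)
    (v : (Fin n → ℝ) → Fin n → ℝ) (x : Fin n → ℝ) (i j : Fin n) : ℝ :=
  pd (fun z => v z i) x j - ∑ k, v x k * chr a x k i j

/-- `r_{ij} = ½(v_{i|j} + v_{j|i})`. -/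
def rSym {n : ℕ} (a : (Fin n → ℝ) → Matrix (Fin n) (Fin n) ℝ)
    (v : (Fin n → ℝ) → Fin n → ℝ) (x : Fin n → ℝ) (i j : Fin n) : ℝ :=
  (1 / 2) * (covD a v x i j + covD a v x j i)

/-- `s_{ij} = ½(v_{i|j} − v_{j|i})`. -/
def sSym {n : ℕ} (a : (Fin n → ℝ) → Matrix (Fin n) (Fin n) ℝ)
    (v : (Fin n → ℝ) → Fin n → ℝ) (x : Fin n → ℝ) (i j : Fin n) : ℝ :=
  (1 / 2) * (covD a v x i j - covD a v x j i)

/-- `r_{00} = r_{ij} y^i y^j`. -/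
def r00 {n : ℕ} (a : (Fin n → ℝ) → Matrix (Fin n) (Fin n) ℝ)
    (v : (Fin n → ℝ) → Fin n → ℝ) (x y : Fin n → ℝ) : ℝ :=
  ∑ i, ∑ j, rSym a v x i j * y i * y j

/-- `s_{j0} = s_{jk} y^k`. -/
def s0low {n : ℕ} (a : (Fin n → ℝ) → Matrix (Fin n) (Fin n) ℝ)
    (v : (Fin n → ℝ) → Fin n → ℝ) (x y : Fin n → ℝ) (j : Fin n) : ℝ :=
  ∑ k, sSym a v x j k * y k

/-- `s^i_0 = a^{ij} s_{j0}`. -/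
def sUp0 {n : ℕ} (a : (Fin n → ℝ) → Matrix (Fin n) (Fin n) ℝ)
    (v : (Fin n → ℝ) → Fin n → ℝ) (x y : Fin n → ℝ) (i : Fin n) : ℝ :=
  ∑ j, (a x)⁻¹ i j * s0low a v x y j

/-- Contraction `w_i · (s of v)^i_0`. -/
def contrS {n : ℕ} (a : (Fin n → ℝ) → Matrix (Fin n) (Fin n) ℝ)
    (v w : (Fin n → ℝ) → Fin n → ℝ) (x y : Fin n → ℝ) : ℝ :=
  ∑ i, w x i * sUp0 a v x y i

/-- Fundamental tensor of `F(x,·)` as a matrix. -/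
def gmatF {n : ℕ} (F : (Fin n → ℝ) → (Fin n → ℝ) → ℝ) (x y : Fin n → ℝ) :
    Matrix (Fin n) (Fin n) ℝ :=
  Matrix.of fun i j => fundT (F x) y i j

/-- Spray coefficients `G^i = ¼ g^{il}(∂g_{jl}/∂x^k + ∂g_{lk}/∂x^j − ∂g_{jk}/∂x^l) y^j y^k`. -/
def sprayF {n : ℕ} (F : (Fin n → ℝ) → (Fin n → ℝ) → ℝ) (x y : Fin n → ℝ) (i : Fin n) : ℝ :=
  (1 / 4) * ∑ l, (gmatF F x y)⁻¹ i l *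
    ∑ j, ∑ k, (pd (fun z => gmatF F z y j l) x k
        + pd (fun z => gmatF F z y l k) x j
        - pd (fun z => gmatF F z y j k) x l) * y j * y k

/-!
Write `ℓ = ∂α/∂y`, `h = b - s ℓ` and `k = γ - s̄ ℓ`. Differentiating `F = α Ψ(β/α, γ/α)` in the
fibre gives `∂F/∂y = Π ℓ + Ψ_s b + Ψ_s̄ γ`, and `g_{ij}` is `Ψ Π (a_{ij} - ℓ_i ℓ_j)` plus `Ψ` times
the Hessian of `Ψ` evaluated on the covectors `h`, `k`, plus `(∂F/∂y^i) (∂F/∂y^j)`. By Euler's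
identity `g_{ij} y^j = F ∂F/∂y^i`, the covector `4 g_{il} G^i` is the Euler-Lagrange covector of
`F²`, which the chain rule in `x` expresses through `^αG`, `r_00` and `s_{j0}`. Hence `G` is the
solution of a linear system with matrix `g_{ij}`, and the claimed vector solves it. The system is
nondegenerate: pairing a kernel vector with `b^i` and `γ^i` leaves a `2 × 2` system of determinant
`Π Γ`.
-/

section Development

open Matrix Filter Function
open scoped Topology

section PartialDerivatives

variable {n : ℕ} {f f₁ : (Fin n → ℝ) → ℝ} {x : Fin n → ℝ}

theorem pd_of_hasFDerivAt {f' : (Fin n → ℝ) →L[ℝ] ℝ} (h : HasFDerivAt f f' x) (i : Fin n) :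
    pd f x i = f' (Pi.single i 1) := by
  rw [pd, h.fderiv]

theorem pd_congr (h : f =ᶠ[𝓝 x] f₁) (i : Fin n) : pd f x i = pd f₁ x i := by
  rw [pd, pd, h.fderiv_eq]

theorem fderiv_apply_eq_pd_dotProduct (f : (Fin n → ℝ) → ℝ) (x v : Fin n → ℝ) :
    fderiv ℝ f x v = pd f x ⬝ᵥ v := by
  conv_lhs => rw [pi_eq_sum_univ' v, map_sum]
  simp only [map_smul, smul_eq_mul, dotProduct, pd, mul_comm]

end PartialDerivatives

section TwoVariables

variable {f : ℝ → ℝ → ℝ} {p : ℝ × ℝ}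

theorem Ds_eq_fderiv (hf : DifferentiableAt ℝ (uncurry f) p) :
    Ds f p.1 p.2 = fderiv ℝ (uncurry f) p (1, 0) := by
  have hc : HasDerivAt (fun u : ℝ => (u, p.2)) ((1, 0) : ℝ × ℝ) p.1 :=
    (hasDerivAt_id p.1).prodMk (hasDerivAt_const p.1 p.2)
  exact (HasFDerivAt.comp_hasDerivAt p.1 hf.hasFDerivAt hc).deriv

theorem Dt_eq_fderiv (hf : DifferentiableAt ℝ (uncurry f) p) :
    Dt f p.1 p.2 = fderiv ℝ (uncurry f) p (0, 1) := by
  have hc : HasDerivAt (fun v : ℝ => (p.1, v)) ((0, 1) : ℝ × ℝ) p.2 :=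
    (hasDerivAt_const p.2 p.1).prodMk (hasDerivAt_id p.2)
  exact (HasFDerivAt.comp_hasDerivAt p.2 hf.hasFDerivAt hc).deriv

theorem eventually_differentiableAt_of_contDiffAt {E : Type*} [NormedAddCommGroup E]
    [NormedSpace ℝ E] {φ : E → ℝ} {z : E} {m : WithTop ℕ∞} (hφ : ContDiffAt ℝ m φ z)
    (hm : 1 ≤ m) : ∀ᶠ w in 𝓝 z, DifferentiableAt ℝ φ w :=
  ((hφ.of_le hm).eventually (by simp)).mono fun _ hw => hw.differentiableAt one_ne_zero

theorem contDiffAt_Ds {m k : WithTop ℕ∞} (hf : ContDiffAt ℝ k (uncurry f) p) (hmk : m + 1 ≤ k) :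
    ContDiffAt ℝ m (uncurry (Ds f)) p :=
  ((hf.fderiv_right hmk).clm_apply contDiffAt_const).congr_of_eventuallyEq <|
    (eventually_differentiableAt_of_contDiffAt hf (le_add_self.trans hmk)).mono
      fun _ hz => Ds_eq_fderiv hz

theorem contDiffAt_Dt {m k : WithTop ℕ∞} (hf : ContDiffAt ℝ k (uncurry f) p) (hmk : m + 1 ≤ k) :
    ContDiffAt ℝ m (uncurry (Dt f)) p :=
  ((hf.fderiv_right hmk).clm_apply contDiffAt_const).congr_of_eventuallyEq <|
    (eventually_differentiableAt_of_contDiffAt hf (le_add_self.trans hmk)).mono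
      fun _ hz => Dt_eq_fderiv hz

theorem differentiableAt_Ds (hf : ContDiffAt ℝ 2 (uncurry f) p) :
    DifferentiableAt ℝ (uncurry (Ds f)) p :=
  (contDiffAt_Ds hf one_add_one_eq_two.le).differentiableAt one_ne_zero

theorem differentiableAt_Dt (hf : ContDiffAt ℝ 2 (uncurry f) p) :
    DifferentiableAt ℝ (uncurry (Dt f)) p :=
  (contDiffAt_Dt hf one_add_one_eq_two.le).differentiableAt one_ne_zero

theorem Ds_Dt_comm (hf : ContDiffAt ℝ 2 (uncurry f) p) :
    Ds (Dt f) p.1 p.2 = Dt (Ds f) p.1 p.2 := by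
  have hd : DifferentiableAt ℝ (fderiv ℝ (uncurry f)) p :=
    (hf.fderiv_right one_add_one_eq_two.le).differentiableAt one_ne_zero
  have hev := eventually_differentiableAt_of_contDiffAt hf one_le_two
  have hs : uncurry (Ds f) =ᶠ[𝓝 p] fun z => fderiv ℝ (uncurry f) z (1, 0) :=
    hev.mono fun _ hz => Ds_eq_fderiv hz
  have ht : uncurry (Dt f) =ᶠ[𝓝 p] fun z => fderiv ℝ (uncurry f) z (0, 1) :=
    hev.mono fun _ hz => Dt_eq_fderiv hz
  rw [Ds_eq_fderiv (differentiableAt_Dt hf), Dt_eq_fderiv (differentiableAt_Ds hf),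
    hs.fderiv_eq, ht.fderiv_eq,
    fderiv_clm_apply hd (differentiableAt_const _), fderiv_clm_apply hd (differentiableAt_const _)]
  simpa using hf.isSymmSndFDerivAt (by simp) (1, 0) (0, 1)

theorem hasFDerivAt_comp_two {E : Type*} [NormedAddCommGroup E] [NormedSpace ℝ E] {s t : E → ℝ}
    {s' t' : E →L[ℝ] ℝ} {z : E} (hf : DifferentiableAt ℝ (uncurry f) (s z, t z))
    (hs : HasFDerivAt s s' z) (ht : HasFDerivAt t t' z) :
    HasFDerivAt (fun w => f (s w) (t w)) (Ds f (s z) (t z) • s' + Dt f (s z) (t z) • t') z := by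
  refine (HasFDerivAt.comp z hf.hasFDerivAt (hs.prodMk ht)).congr_fderiv ?_
  ext v
  have hv : (s' v, t' v) = s' v • ((1, 0) : ℝ × ℝ) + t' v • (0, 1) := by simp
  rw [ContinuousLinearMap.comp_apply, ContinuousLinearMap.prod_apply, hv, map_add, map_smul,
    map_smul, ← Ds_eq_fderiv hf, ← Dt_eq_fderiv hf]
  simp [mul_comm]

end TwoVariables

section HomogeneousComposition

/- The chain rules for `α Ψ(β/α, γ/α)` are stated for functions on an arbitrary normed space because
they are used twice: in the fibre variable `y` and in the base variable `x`. -/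
variable {E : Type*} [NormedAddCommGroup E] [NormedSpace ℝ E] {α β γ : E → ℝ}
  {α' β' γ' : E →L[ℝ] ℝ} {z : E} {Ψ : ℝ → ℝ → ℝ}

theorem hasFDerivAt_div_eq (hβ : HasFDerivAt β β' z) (hα : HasFDerivAt α α' z) (h0 : α z ≠ 0) :
    HasFDerivAt (fun w => β w / α w) ((α z)⁻¹ • (β' - (β z / α z) • α')) z := by
  simp only [div_eq_mul_inv]
  refine (hβ.mul ((hasDerivAt_inv h0).comp_hasFDerivAt z hα)).congr_fderiv ?_
  ext v
  simp only [Function.comp_apply, _root_.smul_apply, _root_.sub_apply, _root_.add_apply,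
    smul_eq_mul]
  field_simp
  ring

theorem hasFDerivAt_mul_comp_ratios
    (hΨ : DifferentiableAt ℝ (uncurry Ψ) (β z / α z, γ z / α z)) (hα : HasFDerivAt α α' z)
    (hβ : HasFDerivAt β β' z) (hγ : HasFDerivAt γ γ' z) (h0 : α z ≠ 0) :
    HasFDerivAt (fun w => α w * Ψ (β w / α w) (γ w / α w))
      (PiF Ψ (β z / α z) (γ z / α z) • α' + Ds Ψ (β z / α z) (γ z / α z) • β'
        + Dt Ψ (β z / α z) (γ z / α z) • γ') z := by
  refine (hα.mul (hasFDerivAt_comp_two hΨ (hasFDerivAt_div_eq hβ hα h0)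
    (hasFDerivAt_div_eq hγ hα h0))).congr_fderiv ?_
  ext v
  simp only [PiF, _root_.add_apply, _root_.smul_apply, _root_.sub_apply, smul_eq_mul]
  field_simp
  ring

variable {s t : E → ℝ} {s' t' : E →L[ℝ] ℝ}

theorem hasFDerivAt_PiF_comp (hΨ : ContDiffAt ℝ 2 (uncurry Ψ) (s z, t z))
    (hs : HasFDerivAt s s' z) (ht : HasFDerivAt t t' z) :
    HasFDerivAt (fun w => PiF Ψ (s w) (t w))
      (-(s z • (Ds (Ds Ψ) (s z) (t z) • s' + Dt (Ds Ψ) (s z) (t z) • t')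
        + t z • (Dt (Ds Ψ) (s z) (t z) • s' + Dt (Dt Ψ) (s z) (t z) • t'))) z := by
  have h₀ := hasFDerivAt_comp_two (hΨ.differentiableAt two_ne_zero) hs ht
  have h₁ := hasFDerivAt_comp_two (differentiableAt_Ds hΨ) hs ht
  have h₂ := hasFDerivAt_comp_two (differentiableAt_Dt hΨ) hs ht
  refine ((h₀.sub (hs.mul h₁)).sub (ht.mul h₂)).congr_fderiv ?_
  ext v
  rw [Ds_Dt_comm hΨ]
  simp only [_root_.add_apply, _root_.smul_apply, _root_.sub_apply, _root_.neg_apply, smul_eq_mul]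
  ring

theorem hasFDerivAt_PiF_mul_add (hΨ : ContDiffAt ℝ 2 (uncurry Ψ) (s z, t z))
    (hs : HasFDerivAt s s' z) (ht : HasFDerivAt t t' z)
    (hα : HasFDerivAt α α' z) (hβ : HasFDerivAt β β' z) (hγ : HasFDerivAt γ γ' z) :
    HasFDerivAt
      (fun w => PiF Ψ (s w) (t w) * α w + Ds Ψ (s w) (t w) * β w + Dt Ψ (s w) (t w) * γ w)
      (PiF Ψ (s z) (t z) • α' + Ds Ψ (s z) (t z) • β' + Dt Ψ (s z) (t z) • γ'
        + ((β z - s z * α z) • (Ds (Ds Ψ) (s z) (t z) • s' + Dt (Ds Ψ) (s z) (t z) • t')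
          + (γ z - t z * α z) • (Dt (Ds Ψ) (s z) (t z) • s' + Dt (Dt Ψ) (s z) (t z) • t'))) z := by
  have h₁ := hasFDerivAt_comp_two (differentiableAt_Ds hΨ) hs ht
  have h₂ := hasFDerivAt_comp_two (differentiableAt_Dt hΨ) hs ht
  refine ((((hasFDerivAt_PiF_comp hΨ hs ht).mul hα).add (h₁.mul hβ)).add
    (h₂.mul hγ)).congr_fderiv ?_
  ext v
  rw [Ds_Dt_comm hΨ]
  simp only [_root_.add_apply, _root_.smul_apply, _root_.neg_apply, smul_eq_mul]
  ring

end HomogeneousComposition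

section Fibre

variable {n : ℕ} {a : Matrix (Fin n) (Fin n) ℝ} {b g v y : Fin n → ℝ} {Ψ : ℝ → ℝ → ℝ}

theorem sq_alph (hy : 0 < alph a y) : alph a y ^ 2 = ∑ i, ∑ j, a i j * y i * y j :=
  Real.sq_sqrt (Real.sqrt_pos.mp hy).le

theorem continuous_alph (a : Matrix (Fin n) (Fin n) ℝ) : Continuous (alph a) := by
  unfold alph
  fun_prop

theorem hasFDerivAt_coord (i : Fin n) (y : Fin n → ℝ) :
    HasFDerivAt (fun z : Fin n → ℝ => z i)
      (ContinuousLinearMap.proj i : (Fin n → ℝ) →L[ℝ] ℝ) y :=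
  hasFDerivAt_apply i y

theorem differentiable_oneForm (v : Fin n → ℝ) : Differentiable ℝ (oneForm v) := by
  unfold oneForm
  fun_prop

theorem pd_oneForm (v y : Fin n → ℝ) (i : Fin n) : pd (oneForm v) y i = v i := by
  have h : HasFDerivAt (oneForm v) (∑ j, v j • ContinuousLinearMap.proj j) y :=
    HasFDerivAt.fun_sum fun j _ => (hasFDerivAt_coord j y).const_mul (v j)
  rw [pd_of_hasFDerivAt h]
  simp [_root_.sum_apply, Pi.single_apply]

theorem differentiableAt_alph (hy : 0 < alph a y) : DifferentiableAt ℝ (alph a) y := by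
  unfold alph
  exact DifferentiableAt.sqrt (by fun_prop) (Real.sqrt_pos.mp hy).ne'

theorem pd_alph (ha : a.IsSymm) (hy : 0 < alph a y) (l : Fin n) :
    pd (alph a) y l = sVar a (a.row l) y := by
  have hq : HasFDerivAt (fun z : Fin n → ℝ => ∑ i, ∑ j, a i j * z i * z j)
      (∑ i, ∑ j, ((a i j * y i) • ContinuousLinearMap.proj j
        + y j • a i j • ContinuousLinearMap.proj i)) y :=
    HasFDerivAt.fun_sum fun i _ => HasFDerivAt.fun_sum fun j _ =>
      ((hasFDerivAt_coord i y).const_mul (a i j)).mul (hasFDerivAt_coord j y)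
  have hswap : ∑ i, a i l * y i = ∑ i, a l i * y i := by simp only [ha.apply]
  have h : HasFDerivAt (alph a) _ y := hq.sqrt (Real.sqrt_pos.mp hy).ne'
  rw [pd_of_hasFDerivAt h]
  simp only [_root_.sum_apply, _root_.smul_apply, _root_.add_apply, ContinuousLinearMap.proj_apply,
    Pi.single_apply, smul_eq_mul, mul_ite, mul_one, mul_zero, Finset.sum_add_distrib,
    Finset.sum_ite_eq', Finset.sum_ite_irrel, Finset.sum_const_zero, Finset.mem_univ, if_true]
  change 1 / (2 * alph a y) * _ = oneForm (a.row l) y / alph a y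
  simp only [mul_comm (y _), hswap, oneForm, row_apply]
  field_simp
  ring

theorem pd_alph_eventuallyEq (ha : a.IsSymm) (hy : 0 < alph a y) (l : Fin n) :
    (fun z => pd (alph a) z l) =ᶠ[𝓝 y] sVar a (a.row l) :=
  (((continuous_alph a).tendsto y).eventually_const_lt hy).mono fun _ hz => pd_alph ha hz l

theorem hasFDerivAt_sVar (v : Fin n → ℝ) (hy : 0 < alph a y) :
    HasFDerivAt (sVar a v)
      ((alph a y)⁻¹ • (fderiv ℝ (oneForm v) y - sVar a v y • fderiv ℝ (alph a) y)) y :=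
  hasFDerivAt_div_eq (differentiable_oneForm v y).hasFDerivAt
    (differentiableAt_alph hy).hasFDerivAt hy.ne'

theorem pd_sVar (v : Fin n → ℝ) (hy : 0 < alph a y) (i : Fin n) :
    pd (sVar a v) y i = (alph a y)⁻¹ * hl a v y i := by
  rw [pd_of_hasFDerivAt (hasFDerivAt_sVar v hy), hl, ← pd_oneForm v y i]
  rfl

theorem pd2_alph (ha : a.IsSymm) (hy : 0 < alph a y) (i j : Fin n) :
    pd2 (alph a) y i j = (alph a y)⁻¹ * (a i j - pd (alph a) y i * pd (alph a) y j) := by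
  rw [pd2, pd_congr (pd_alph_eventuallyEq ha hy j), pd_sVar _ hy, hl, pd_alph ha hy j,
    row_apply, ha.apply]
  ring

theorem hasFDerivAt_Fm (hy : 0 < alph a y)
    (hΨ : DifferentiableAt ℝ (uncurry Ψ) (sVar a b y, sVar a g y)) :
    HasFDerivAt (Fm a b g Ψ)
      (PiF Ψ (sVar a b y) (sVar a g y) • fderiv ℝ (alph a) y
        + Ds Ψ (sVar a b y) (sVar a g y) • fderiv ℝ (oneForm b) y
        + Dt Ψ (sVar a b y) (sVar a g y) • fderiv ℝ (oneForm g) y) y :=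
  hasFDerivAt_mul_comp_ratios hΨ (differentiableAt_alph hy).hasFDerivAt
    (differentiable_oneForm b y).hasFDerivAt (differentiable_oneForm g y).hasFDerivAt hy.ne'

theorem pd_Fm (hy : 0 < alph a y)
    (hΨ : DifferentiableAt ℝ (uncurry Ψ) (sVar a b y, sVar a g y)) (i : Fin n) :
    pd (Fm a b g Ψ) y i =
      PiF Ψ (sVar a b y) (sVar a g y) * pd (alph a) y i
        + Ds Ψ (sVar a b y) (sVar a g y) * b i + Dt Ψ (sVar a b y) (sVar a g y) * g i := by
  rw [pd_of_hasFDerivAt (hasFDerivAt_Fm hy hΨ), ← pd_oneForm b y i, ← pd_oneForm g y i]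
  rfl

/-- The Hessian of `Ψ` at `(p, q)` applied to `(X, Y)`, as the covector on `ℝⁿ` obtained by pairing
its two components with the covectors `h` and `k`. -/
def hessCov (Ψ : ℝ → ℝ → ℝ) (p q X Y : ℝ) (h k : Fin n → ℝ) : Fin n → ℝ :=
  (Ds (Ds Ψ) p q * X + Dt (Ds Ψ) p q * Y) • h + (Dt (Ds Ψ) p q * X + Dt (Dt Ψ) p q * Y) • k

theorem eventually_fibre (hy : 0 < alph a y) {P : ℝ × ℝ → Prop}
    (hP : ∀ᶠ p in 𝓝 (sVar a b y, sVar a g y), P p) :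
    ∀ᶠ z in 𝓝 y, 0 < alph a z ∧ P (sVar a b z, sVar a g z) := by
  have hs : ContinuousAt (fun z => (sVar a b z, sVar a g z)) y :=
    (hasFDerivAt_sVar b hy).continuousAt.prodMk (hasFDerivAt_sVar g hy).continuousAt
  exact (((continuous_alph a).tendsto y).eventually_const_lt hy).and (hs.eventually hP)

theorem hasFDerivAt_pd_Fm (ha : a.IsSymm) (hy : 0 < alph a y)
    (hΨ : ContDiffAt ℝ 2 (uncurry Ψ) (sVar a b y, sVar a g y)) (j : Fin n) :
    HasFDerivAt (fun z => pd (Fm a b g Ψ) z j)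
      (PiF Ψ (sVar a b y) (sVar a g y) • fderiv ℝ (fun z => pd (alph a) z j) y
        + (hl a b y j • (Ds (Ds Ψ) (sVar a b y) (sVar a g y) • fderiv ℝ (sVar a b) y
            + Dt (Ds Ψ) (sVar a b y) (sVar a g y) • fderiv ℝ (sVar a g) y)
          + hl a g y j • (Dt (Ds Ψ) (sVar a b y) (sVar a g y) • fderiv ℝ (sVar a b) y
            + Dt (Dt Ψ) (sVar a b y) (sVar a g y) • fderiv ℝ (sVar a g) y))) y := by
  have hpd : (fun z => pd (Fm a b g Ψ) z j) =ᶠ[𝓝 y] _ :=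
    (eventually_fibre hy (eventually_differentiableAt_of_contDiffAt hΨ one_le_two)).mono
      fun _ hz => pd_Fm hz.1 hz.2 j
  have hℓ : DifferentiableAt ℝ (fun z => pd (alph a) z j) y :=
    (hasFDerivAt_sVar (a.row j) hy).differentiableAt.congr_of_eventuallyEq
      (pd_alph_eventuallyEq ha hy j)
  refine ((hasFDerivAt_PiF_mul_add hΨ
    (hasFDerivAt_sVar b hy).differentiableAt.hasFDerivAt
    (hasFDerivAt_sVar g hy).differentiableAt.hasFDerivAt hℓ.hasFDerivAt
    (hasFDerivAt_const (b j) y) (hasFDerivAt_const (g j) y)).congr_fderiv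
      ?_).congr_of_eventuallyEq hpd
  simp only [smul_zero, add_zero, hl]

theorem pd2_Fm (ha : a.IsSymm) (hy : 0 < alph a y)
    (hΨ : ContDiffAt ℝ 2 (uncurry Ψ) (sVar a b y, sVar a g y)) (i j : Fin n) :
    pd2 (Fm a b g Ψ) y i j =
      PiF Ψ (sVar a b y) (sVar a g y) * pd2 (alph a) y i j
        + (alph a y)⁻¹ * hessCov Ψ (sVar a b y) (sVar a g y) (hl a b y i) (hl a g y i)
            (hl a b y) (hl a g y) j := by
  rw [pd2, pd_of_hasFDerivAt (hasFDerivAt_pd_Fm ha hy hΨ j)]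
  change PiF Ψ _ _ * pd2 (alph a) y i j
    + (hl a b y j * (_ * pd (sVar a b) y i + _ * pd (sVar a g) y i)
      + hl a g y j * (_ * pd (sVar a b) y i + _ * pd (sVar a g) y i)) = _
  simp only [pd_sVar _ hy, hessCov, Pi.add_apply, Pi.smul_apply, smul_eq_mul]
  ring

theorem fundT_eq_mul_pd2_add {F : (Fin n → ℝ) → ℝ} (i j : Fin n)
    (hF : ∀ᶠ z in 𝓝 y, DifferentiableAt ℝ F z) (hFj : DifferentiableAt ℝ (fun z => pd F z j) y) :
    fundT F y i j = F y * pd2 F y i j + pd F y i * pd F y j := by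
  have hpd : (fun z => pd (fun w => F w ^ 2) z j) =ᶠ[𝓝 y] fun z => 2 * (F z * pd F z j) :=
    hF.mono fun z hz => by
      have h := hz.hasFDerivAt.fun_mul hz.hasFDerivAt
      simp only [sq, pd_of_hasFDerivAt h, two_mul]
      rfl
  rw [fundT, pd2, pd_congr hpd,
    pd_of_hasFDerivAt ((hF.self_of_nhds.hasFDerivAt.fun_mul hFj.hasFDerivAt).const_mul 2)]
  change 1 / 2 * (2 * (F y * pd2 F y i j + pd F y j * pd F y i)) = _
  ring

/-- The fundamental tensor of `F = α Ψ(s, s̄)` in closed form, in terms of `ℓ = ∂α/∂y` and of the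
covectors `h = b - sℓ` and `k = γ - s̄ℓ`. -/
def fundMat (a : Matrix (Fin n) (Fin n) ℝ) (b g : Fin n → ℝ) (Ψ : ℝ → ℝ → ℝ) (y : Fin n → ℝ) :
    Matrix (Fin n) (Fin n) ℝ :=
  Matrix.of fun i j =>
    Ψ (sVar a b y) (sVar a g y) *
      (PiF Ψ (sVar a b y) (sVar a g y) * (a i j - pd (alph a) y i * pd (alph a) y j)
        + hessCov Ψ (sVar a b y) (sVar a g y) (hl a b y i) (hl a g y i)
            (hl a b y) (hl a g y) j)
    + pd (Fm a b g Ψ) y i * pd (Fm a b g Ψ) y j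

theorem fundT_Fm (ha : a.IsSymm) (hy : 0 < alph a y)
    (hΨ : ContDiffAt ℝ 2 (uncurry Ψ) (sVar a b y, sVar a g y)) (i j : Fin n) :
    fundT (Fm a b g Ψ) y i j = fundMat a b g Ψ y i j := by
  have hF : ∀ᶠ z in 𝓝 y, DifferentiableAt ℝ (Fm a b g Ψ) z :=
    (eventually_fibre hy (eventually_differentiableAt_of_contDiffAt hΨ one_le_two)).mono
      fun _ hz => (hasFDerivAt_Fm hz.1 hz.2).differentiableAt
  rw [fundT_eq_mul_pd2_add i j hF (hasFDerivAt_pd_Fm ha hy hΨ j).differentiableAt,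
    pd2_Fm ha hy hΨ, pd2_alph ha hy, Fm, fundMat, of_apply]
  field_simp

end Fibre

section PointwiseAlgebra

variable {Ψ : ℝ → ℝ → ℝ} {p q : ℝ}

/-- The coefficient `Γ₁` of `b^i`, as a function of `R^β` and `R^γ`. -/
def Gamma1F (Ψ : ℝ → ℝ → ℝ) (G Θ p q Rb Rg : ℝ) : ℝ :=
  (Ds (Ds Ψ) p q + (G - q ^ 2) * JF Ψ p q) * Rb
    + (Dt (Ds Ψ) p q - (Θ - p * q) * JF Ψ p q) * Rg

/-- The coefficient `Γ₂` of `γ^i`, as a function of `R^β` and `R^γ`. -/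
def Gamma2F (Ψ : ℝ → ℝ → ℝ) (B Θ p q Rb Rg : ℝ) : ℝ :=
  (Dt (Dt Ψ) p q + (B - p ^ 2) * JF Ψ p q) * Rg
    + (Dt (Ds Ψ) p q - (Θ - p * q) * JF Ψ p q) * Rb

/-- The coefficient `Γ₃` of `α^i / Ψ`, as a function of `R^β` and `R^γ`. -/
def Gamma3F (Ψ : ℝ → ℝ → ℝ) (B G Θ p q Rb Rg : ℝ) : ℝ :=
  (rho1F Ψ p q + pi2F Ψ p q * (Θ - p * q) - pi1F Ψ p q * (G - q ^ 2)) * Rb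
    + (rhobar1F Ψ p q - pi2F Ψ p q * (B - p ^ 2) + pi1F Ψ p q * (Θ - p * q)) * Rg

theorem JF_mul_PiF (hPi : PiF Ψ p q ≠ 0) :
    JF Ψ p q * PiF Ψ p q = Ds (Ds Ψ) p q * Dt (Dt Ψ) p q - Dt (Ds Ψ) p q ^ 2 :=
  div_mul_cancel₀ _ hPi

/- `Π Γ` is the determinant of the system below; the combinations are Cramer's rule. -/
theorem eq_zero_of_PiF_mul_add_eq_zero (hPi : PiF Ψ p q ≠ 0) {B G Θ X Y : ℝ}
    (hΓ : GammaF Ψ B G Θ p q ≠ 0)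
    (hX : PiF Ψ p q * X + (Ds (Ds Ψ) p q * X + Dt (Ds Ψ) p q * Y) * (B - p ^ 2)
      + (Dt (Ds Ψ) p q * X + Dt (Dt Ψ) p q * Y) * (Θ - p * q) = 0)
    (hY : PiF Ψ p q * Y + (Ds (Ds Ψ) p q * X + Dt (Ds Ψ) p q * Y) * (Θ - p * q)
      + (Dt (Ds Ψ) p q * X + Dt (Dt Ψ) p q * Y) * (G - q ^ 2) = 0) :
    X = 0 ∧ Y = 0 := by
  have hJ := JF_mul_PiF hPi
  have hX' : PiF Ψ p q * GammaF Ψ B G Θ p q * X = 0 := by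
    rw [GammaF]
    linear_combination
      (PiF Ψ p q + Dt (Ds Ψ) p q * (Θ - p * q) + Dt (Dt Ψ) p q * (G - q ^ 2)) * hX
        - (Dt (Ds Ψ) p q * (B - p ^ 2) + Dt (Dt Ψ) p q * (Θ - p * q)) * hY
        + X * ((B - p ^ 2) * (G - q ^ 2) - (Θ - p * q) ^ 2) * hJ
  have hY' : PiF Ψ p q * GammaF Ψ B G Θ p q * Y = 0 := by
    rw [GammaF]
    linear_combination
      (PiF Ψ p q + Dt (Ds Ψ) p q * (Θ - p * q) + Ds (Ds Ψ) p q * (B - p ^ 2)) * hY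
        - (Dt (Ds Ψ) p q * (G - q ^ 2) + Ds (Ds Ψ) p q * (Θ - p * q)) * hX
        + Y * ((B - p ^ 2) * (G - q ^ 2) - (Θ - p * q) ^ 2) * hJ
  exact ⟨(mul_eq_zero_iff_left (mul_ne_zero hPi hΓ)).mp hX',
    (mul_eq_zero_iff_left (mul_ne_zero hPi hΓ)).mp hY'⟩

theorem PiF_mul_Gamma1F_add (hPi : PiF Ψ p q ≠ 0) (B G Θ Rb Rg : ℝ) :
    PiF Ψ p q * Gamma1F Ψ G Θ p q Rb Rg
      + Ds (Ds Ψ) p q * (Gamma1F Ψ G Θ p q Rb Rg * (B - p ^ 2)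
          + Gamma2F Ψ B Θ p q Rb Rg * (Θ - p * q))
      + Dt (Ds Ψ) p q * (Gamma1F Ψ G Θ p q Rb Rg * (Θ - p * q)
          + Gamma2F Ψ B Θ p q Rb Rg * (G - q ^ 2))
      = GammaF Ψ B G Θ p q * (Ds (Ds Ψ) p q * Rb + Dt (Ds Ψ) p q * Rg) := by
  have hJ := JF_mul_PiF hPi
  rw [Gamma1F, Gamma2F, GammaF]
  linear_combination ((G - q ^ 2) * Rb - (Θ - p * q) * Rg) * hJ

theorem PiF_mul_Gamma2F_add (hPi : PiF Ψ p q ≠ 0) (B G Θ Rb Rg : ℝ) :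
    PiF Ψ p q * Gamma2F Ψ B Θ p q Rb Rg
      + Dt (Ds Ψ) p q * (Gamma1F Ψ G Θ p q Rb Rg * (B - p ^ 2)
          + Gamma2F Ψ B Θ p q Rb Rg * (Θ - p * q))
      + Dt (Dt Ψ) p q * (Gamma1F Ψ G Θ p q Rb Rg * (Θ - p * q)
          + Gamma2F Ψ B Θ p q Rb Rg * (G - q ^ 2))
      = GammaF Ψ B G Θ p q * (Dt (Ds Ψ) p q * Rb + Dt (Dt Ψ) p q * Rg) := by
  have hJ := JF_mul_PiF hPi
  rw [Gamma1F, Gamma2F, GammaF]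
  linear_combination ((B - p ^ 2) * Rg - (Θ - p * q) * Rb) * hJ

theorem mul_Gamma1F_add_Gamma3F (B G Θ Rb Rg : ℝ) :
    Ψ p q * (Gamma1F Ψ G Θ p q Rb Rg * p + Gamma2F Ψ B Θ p q Rb Rg * q)
      + Gamma3F Ψ B G Θ p q Rb Rg
      + Ds Ψ p q * (Gamma1F Ψ G Θ p q Rb Rg * (B - p ^ 2)
          + Gamma2F Ψ B Θ p q Rb Rg * (Θ - p * q))
      + Dt Ψ p q * (Gamma1F Ψ G Θ p q Rb Rg * (Θ - p * q)
          + Gamma2F Ψ B Θ p q Rb Rg * (G - q ^ 2))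
      = GammaF Ψ B G Θ p q * (Ds Ψ p q * Rb + Dt Ψ p q * Rg) := by
  simp only [Gamma1F, Gamma2F, Gamma3F, GammaF, rho1F, rhobar1F, rho0F, rhobar0F, rho3F, pi1F,
    pi2F, PiF]
  ring

end PointwiseAlgebra

section FundamentalTensor

variable {n : ℕ} {a : Matrix (Fin n) (Fin n) ℝ} {b g u v w y : Fin n → ℝ} {Ψ : ℝ → ℝ → ℝ}

theorem hl_eq (a : Matrix (Fin n) (Fin n) ℝ) (v y : Fin n → ℝ) :
    hl a v y = v - sVar a v y • pd (alph a) y := rfl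

theorem sVar_mul_alph (v : Fin n → ℝ) (hy : 0 < alph a y) :
    sVar a v y * alph a y = v ⬝ᵥ y :=
  div_mul_cancel₀ _ hy.ne'

theorem mulVec_eq_alph_smul_pd (ha : a.IsSymm) (hy : 0 < alph a y) :
    a *ᵥ y = alph a y • pd (alph a) y := by
  ext l
  rw [Pi.smul_apply, pd_alph ha hy, smul_eq_mul, mul_comm, sVar_mul_alph _ hy]
  rfl

theorem pd_alph_dotProduct_self (ha : a.IsSymm) (hy : 0 < alph a y) :
    pd (alph a) y ⬝ᵥ y = alph a y := by
  have h : y ⬝ᵥ a *ᵥ y = alph a y ^ 2 := by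
    rw [sq_alph hy]
    simp only [dotProduct, mulVec, Finset.mul_sum]
    exact Finset.sum_congr rfl fun i _ => Finset.sum_congr rfl fun j _ => by ring
  rw [mulVec_eq_alph_smul_pd ha hy, dotProduct_smul, smul_eq_mul, sq] at h
  rw [dotProduct_comm, mul_left_cancel₀ hy.ne' h]

theorem hl_dotProduct_self (ha : a.IsSymm) (hy : 0 < alph a y) : hl a v y ⬝ᵥ y = 0 := by
  rw [hl_eq, sub_dotProduct, smul_dotProduct, pd_alph_dotProduct_self ha hy, smul_eq_mul,
    sVar_mul_alph v hy, sub_self]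

theorem pd_Fm_dotProduct (hy : 0 < alph a y)
    (hΨ : DifferentiableAt ℝ (uncurry Ψ) (sVar a b y, sVar a g y)) (w : Fin n → ℝ) :
    pd (Fm a b g Ψ) y ⬝ᵥ w =
      Ψ (sVar a b y) (sVar a g y) * (pd (alph a) y ⬝ᵥ w)
        + Ds Ψ (sVar a b y) (sVar a g y) * (hl a b y ⬝ᵥ w)
        + Dt Ψ (sVar a b y) (sVar a g y) * (hl a g y ⬝ᵥ w) := by
  have h : pd (Fm a b g Ψ) y = Ψ (sVar a b y) (sVar a g y) • pd (alph a) y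
      + Ds Ψ (sVar a b y) (sVar a g y) • hl a b y
      + Dt Ψ (sVar a b y) (sVar a g y) • hl a g y := by
    ext i
    simp only [pd_Fm hy hΨ, PiF, hl, Pi.add_apply, Pi.smul_apply, smul_eq_mul]
    ring
  simp only [h, add_dotProduct, smul_dotProduct, smul_eq_mul]

theorem pd_Fm_dotProduct_self (ha : a.IsSymm) (hy : 0 < alph a y)
    (hΨ : DifferentiableAt ℝ (uncurry Ψ) (sVar a b y, sVar a g y)) :
    pd (Fm a b g Ψ) y ⬝ᵥ y = Fm a b g Ψ y := by
  rw [pd_Fm_dotProduct hy hΨ, pd_alph_dotProduct_self ha hy, hl_dotProduct_self ha hy,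
    hl_dotProduct_self ha hy, Fm]
  ring

theorem isSymm_fundMat (ha : a.IsSymm) : (fundMat a b g Ψ y).IsSymm := by
  ext i j
  simp only [fundMat, hessCov, transpose_apply, of_apply, Pi.add_apply, Pi.smul_apply,
    smul_eq_mul, ha.apply j i]
  ring

theorem fundMat_mulVec (w : Fin n → ℝ) :
    fundMat a b g Ψ y *ᵥ w =
      Ψ (sVar a b y) (sVar a g y) •
        (PiF Ψ (sVar a b y) (sVar a g y) • (a *ᵥ w - (pd (alph a) y ⬝ᵥ w) • pd (alph a) y)
          + hessCov Ψ (sVar a b y) (sVar a g y) (hl a b y ⬝ᵥ w) (hl a g y ⬝ᵥ w)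
              (hl a b y) (hl a g y))
        + (pd (Fm a b g Ψ) y ⬝ᵥ w) • pd (Fm a b g Ψ) y := by
  ext i
  simp only [fundMat, hessCov, mulVec, dotProduct, of_apply, Pi.add_apply, Pi.sub_apply,
    Pi.smul_apply, smul_eq_mul, Finset.mul_sum, Finset.sum_mul, ← Finset.sum_add_distrib,
    ← Finset.sum_sub_distrib]
  exact Finset.sum_congr rfl fun j _ => by ring

theorem fundMat_mulVec_self (ha : a.IsSymm) (hy : 0 < alph a y)
    (hΨ : DifferentiableAt ℝ (uncurry Ψ) (sVar a b y, sVar a g y)) :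
    fundMat a b g Ψ y *ᵥ y = Fm a b g Ψ y • pd (Fm a b g Ψ) y := by
  rw [fundMat_mulVec, mulVec_eq_alph_smul_pd ha hy, pd_alph_dotProduct_self ha hy,
    hl_dotProduct_self ha hy, hl_dotProduct_self ha hy, pd_Fm_dotProduct_self ha hy hΨ]
  simp [hessCov]

theorem mulVec_inv_mulVec (hd : IsUnit a.det) (v : Fin n → ℝ) : a *ᵥ a⁻¹ *ᵥ v = v := by
  rw [mulVec_mulVec, mul_nonsing_inv _ hd, one_mulVec]

theorem inv_mulVec_mulVec (hd : IsUnit a.det) (v : Fin n → ℝ) : a⁻¹ *ᵥ a *ᵥ v = v := by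
  rw [mulVec_mulVec, nonsing_inv_mul _ hd, one_mulVec]

theorem mulVec_dotProduct_inv_mulVec (ha : a.IsSymm) (hd : IsUnit a.det) (w v : Fin n → ℝ) :
    (a *ᵥ w) ⬝ᵥ (a⁻¹ *ᵥ v) = v ⬝ᵥ w := by
  rw [dotProduct_comm, dotProduct_mulVec, ← mulVec_transpose, ha.eq, mulVec_inv_mulVec hd]

theorem dotProduct_inv_mulVec (a : Matrix (Fin n) (Fin n) ℝ) (u v : Fin n → ℝ) :
    u ⬝ᵥ a⁻¹ *ᵥ v = quadInv a u v := by
  simp only [quadInv, dotProduct, mulVec, Finset.mul_sum]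
  exact Finset.sum_congr rfl fun i _ => Finset.sum_congr rfl fun j _ => by ring

theorem pd_alph_dotProduct_inv_mulVec (ha : a.IsSymm) (hd : IsUnit a.det) (hy : 0 < alph a y)
    (v : Fin n → ℝ) : pd (alph a) y ⬝ᵥ a⁻¹ *ᵥ v = sVar a v y := by
  have h := mulVec_dotProduct_inv_mulVec ha hd y v
  rw [mulVec_eq_alph_smul_pd ha hy, smul_dotProduct, smul_eq_mul] at h
  rw [sVar, eq_div_iff hy.ne', mul_comm, h]
  rfl

theorem hl_dotProduct_inv_mulVec (ha : a.IsSymm) (hd : IsUnit a.det) (hy : 0 < alph a y)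
    (u v : Fin n → ℝ) :
    hl a u y ⬝ᵥ a⁻¹ *ᵥ v = quadInv a u v - sVar a u y * sVar a v y := by
  rw [hl_eq, sub_dotProduct, smul_dotProduct, pd_alph_dotProduct_inv_mulVec ha hd hy,
    dotProduct_inv_mulVec, smul_eq_mul]

theorem quadInv_comm (ha : a.IsSymm) (u v : Fin n → ℝ) : quadInv a u v = quadInv a v u := by
  rw [← dotProduct_inv_mulVec, dotProduct_mulVec, ← mulVec_transpose, transpose_nonsing_inv,
    ha.eq, dotProduct_comm, dotProduct_inv_mulVec]

theorem fundMat_mulVec_eq_zero (ha : a.IsSymm) (hy : 0 < alph a y)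
    (hΨ : DifferentiableAt ℝ (uncurry Ψ) (sVar a b y, sVar a g y))
    (hΨ0 : Ψ (sVar a b y) (sVar a g y) ≠ 0) (hw : fundMat a b g Ψ y *ᵥ w = 0) :
    pd (Fm a b g Ψ) y ⬝ᵥ w = 0 ∧
      PiF Ψ (sVar a b y) (sVar a g y) • (a *ᵥ w - (pd (alph a) y ⬝ᵥ w) • pd (alph a) y)
        + hessCov Ψ (sVar a b y) (sVar a g y) (hl a b y ⬝ᵥ w) (hl a g y ⬝ᵥ w)
            (hl a b y) (hl a g y) = 0 := by
  have hF : Fm a b g Ψ y * (pd (Fm a b g Ψ) y ⬝ᵥ w) = 0 := by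
    rw [← smul_eq_mul, ← smul_dotProduct, ← fundMat_mulVec_self ha hy hΨ,
      ← (isSymm_fundMat ha).eq, mulVec_transpose, ← dotProduct_mulVec, hw, dotProduct_zero]
  have hdF := (mul_eq_zero_iff_left (mul_ne_zero hy.ne' hΨ0)).mp hF
  rw [fundMat_mulVec, hdF, zero_smul, add_zero] at hw
  exact ⟨hdF, (smul_eq_zero_iff_right hΨ0).mp hw⟩

theorem isUnit_det_fundMat (ha : a.IsSymm) (hd : IsUnit a.det) (hy : 0 < alph a y)
    (hΨ : DifferentiableAt ℝ (uncurry Ψ) (sVar a b y, sVar a g y))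
    (hΨ0 : Ψ (sVar a b y) (sVar a g y) ≠ 0) (hPi : PiF Ψ (sVar a b y) (sVar a g y) ≠ 0)
    (hΓ : GammaF Ψ (quadInv a b b) (quadInv a g g) (quadInv a b g)
      (sVar a b y) (sVar a g y) ≠ 0) :
    IsUnit (fundMat a b g Ψ y).det := by
  rw [isUnit_iff_ne_zero, ne_eq, ← exists_mulVec_eq_zero_iff]
  rintro ⟨w, hw0, hw⟩
  obtain ⟨hdF, hvec⟩ := fundMat_mulVec_eq_zero ha hy hΨ hΨ0 hw
  have hpair : ∀ v, hl a v y ⬝ᵥ w = (a *ᵥ w) ⬝ᵥ a⁻¹ *ᵥ v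
      - (pd (alph a) y ⬝ᵥ w) * (pd (alph a) y ⬝ᵥ a⁻¹ *ᵥ v) := fun v => by
    rw [mulVec_dotProduct_inv_mulVec ha hd, pd_alph_dotProduct_inv_mulVec ha hd hy, hl_eq,
      sub_dotProduct, smul_dotProduct, smul_eq_mul, mul_comm]
  have hb := congrArg (· ⬝ᵥ a⁻¹ *ᵥ b) hvec
  have hg := congrArg (· ⬝ᵥ a⁻¹ *ᵥ g) hvec
  simp only [hessCov, add_dotProduct, smul_dotProduct, sub_dotProduct, zero_dotProduct,
    smul_eq_mul, ← hpair, hl_dotProduct_inv_mulVec ha hd hy, ← sq] at hb hg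
  rw [quadInv_comm ha g b] at hb
  obtain ⟨hX, hY⟩ := eq_zero_of_PiF_mul_add_eq_zero hPi hΓ
    (X := hl a b y ⬝ᵥ w) (Y := hl a g y ⬝ᵥ w)
    (by linear_combination hb) (by linear_combination hg)
  have hm : pd (alph a) y ⬝ᵥ w = 0 := by
    rw [pd_Fm_dotProduct hy hΨ, hX, hY, mul_zero, mul_zero, add_zero, add_zero] at hdF
    exact (mul_eq_zero_iff_left hΨ0).mp hdF
  have haw : a *ᵥ w = 0 := by
    simpa [hX, hY, hm, hessCov, hPi] using hvec
  exact hw0 (by rw [← inv_mulVec_mulVec hd w, haw, mulVec_zero])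

/-- The vector with components `c₁`, `c₂`, `c₃` along `b^i`, `γ^i` and `α^i`. -/
def frameVec (a : Matrix (Fin n) (Fin n) ℝ) (b g y : Fin n → ℝ) (c₁ c₂ c₃ : ℝ) : Fin n → ℝ :=
  c₁ • a⁻¹ *ᵥ b + c₂ • a⁻¹ *ᵥ g + c₃ • (alph a y)⁻¹ • y

theorem pd_alph_dotProduct_frameVec (ha : a.IsSymm) (hd : IsUnit a.det) (hy : 0 < alph a y)
    (b g : Fin n → ℝ) (c₁ c₂ c₃ : ℝ) :
    pd (alph a) y ⬝ᵥ frameVec a b g y c₁ c₂ c₃ = c₁ * sVar a b y + c₂ * sVar a g y + c₃ := by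
  simp only [frameVec, dotProduct_add, dotProduct_smul, smul_eq_mul,
    pd_alph_dotProduct_inv_mulVec ha hd hy, pd_alph_dotProduct_self ha hy,
    inv_mul_cancel₀ hy.ne', mul_one]

theorem hl_dotProduct_frameVec (ha : a.IsSymm) (hd : IsUnit a.det) (hy : 0 < alph a y)
    (v b g : Fin n → ℝ) (c₁ c₂ c₃ : ℝ) :
    hl a v y ⬝ᵥ frameVec a b g y c₁ c₂ c₃ =
      c₁ * (quadInv a v b - sVar a v y * sVar a b y)
        + c₂ * (quadInv a v g - sVar a v y * sVar a g y) := by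
  simp only [frameVec, dotProduct_add, dotProduct_smul, smul_eq_mul,
    hl_dotProduct_inv_mulVec ha hd hy, hl_dotProduct_self ha hy, mul_zero, add_zero]

theorem mulVec_frameVec (ha : a.IsSymm) (hd : IsUnit a.det) (hy : 0 < alph a y)
    (b g : Fin n → ℝ) (c₁ c₂ c₃ : ℝ) :
    a *ᵥ frameVec a b g y c₁ c₂ c₃ = c₁ • b + c₂ • g + c₃ • pd (alph a) y := by
  simp only [frameVec, mulVec_add, mulVec_smul, mulVec_inv_mulVec hd,
    mulVec_eq_alph_smul_pd ha hy, inv_smul_smul₀ hy.ne']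

theorem fundMat_mulVec_frameVec (ha : a.IsSymm) (hd : IsUnit a.det) (hy : 0 < alph a y)
    (hΨ : DifferentiableAt ℝ (uncurry Ψ) (sVar a b y, sVar a g y))
    (hΨ0 : Ψ (sVar a b y) (sVar a g y) ≠ 0) (hPi : PiF Ψ (sVar a b y) (sVar a g y) ≠ 0)
    (Rb Rg : ℝ) :
    fundMat a b g Ψ y *ᵥ frameVec a b g y
        (Gamma1F Ψ (quadInv a g g) (quadInv a b g) (sVar a b y) (sVar a g y) Rb Rg)
        (Gamma2F Ψ (quadInv a b b) (quadInv a b g) (sVar a b y) (sVar a g y) Rb Rg)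
        (1 / Ψ (sVar a b y) (sVar a g y) * Gamma3F Ψ (quadInv a b b) (quadInv a g g)
          (quadInv a b g) (sVar a b y) (sVar a g y) Rb Rg)
      = GammaF Ψ (quadInv a b b) (quadInv a g g) (quadInv a b g) (sVar a b y) (sVar a g y) •
        ((Ds Ψ (sVar a b y) (sVar a g y) * Rb + Dt Ψ (sVar a b y) (sVar a g y) * Rg) •
            pd (Fm a b g Ψ) y
          + Ψ (sVar a b y) (sVar a g y) • hessCov Ψ (sVar a b y) (sVar a g y) Rb Rg
              (hl a b y) (hl a g y)) := by
  rw [fundMat_mulVec, pd_Fm_dotProduct hy hΨ, mulVec_frameVec ha hd hy,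
    pd_alph_dotProduct_frameVec ha hd hy, hl_dotProduct_frameVec ha hd hy,
    hl_dotProduct_frameVec ha hd hy, quadInv_comm ha g b]
  generalize quadInv a b b = B, quadInv a g g = G, quadInv a b g = Θ, pd (Fm a b g Ψ) y = dF
  have h₁ := PiF_mul_Gamma1F_add hPi B G Θ Rb Rg
  have h₂ := PiF_mul_Gamma2F_add hPi B G Θ Rb Rg
  have h₃ := mul_Gamma1F_add_Gamma3F (Ψ := Ψ) (p := sVar a b y) (q := sVar a g y) B G Θ Rb Rg
  ext i
  simp only [hessCov, hl_eq, Pi.add_apply, Pi.sub_apply, Pi.smul_apply, smul_eq_mul]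
  field_simp
  linear_combination Ψ (sVar a b y) (sVar a g y) * (b i - sVar a b y * pd (alph a) y i) * h₁
    + Ψ (sVar a b y) (sVar a g y) * (g i - sVar a g y * pd (alph a) y i) * h₂ + dF i * h₃

end FundamentalTensor

section GeodesicCovector

variable {n : ℕ} {a gg gg' : (Fin n → ℝ) → Matrix (Fin n) (Fin n) ℝ}
  {v : (Fin n → ℝ) → Fin n → ℝ} {x y : Fin n → ℝ}

/-- `4 g_{il} G^i` for a metric tensor `g`: the covector of the geodesic equation at `(x, y)`,
before its index is raised. For a Finsler metric the `y`-dependence of `g` is frozen in `gg`. -/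
def geodesicCovec (gg : (Fin n → ℝ) → Matrix (Fin n) (Fin n) ℝ) (x y : Fin n → ℝ) (l : Fin n) : ℝ :=
  ∑ j, ∑ k, (pd (fun z => gg z j l) x k + pd (fun z => gg z l k) x j
    - pd (fun z => gg z j k) x l) * y j * y k

theorem geodesicCovec_congr (h : gg =ᶠ[𝓝 x] gg') (y : Fin n → ℝ) :
    geodesicCovec gg x y = geodesicCovec gg' x y := by
  have hpd : ∀ i j k, pd (fun z => gg z i j) x k = pd (fun z => gg' z i j) x k := fun i j k =>
    pd_congr (h.fun_comp fun m : Matrix (Fin n) (Fin n) ℝ => m i j) k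
  ext l
  simp only [geodesicCovec, hpd]

theorem fderiv_dotProduct (hv : ∀ i, DifferentiableAt ℝ (fun z => v z i) x) (w u : Fin n → ℝ) :
    fderiv ℝ (fun z => v z ⬝ᵥ w) x u = ∑ i, fderiv ℝ (fun z => v z i) x u * w i := by
  have h : HasFDerivAt (fun z => v z ⬝ᵥ w) (∑ i, w i • fderiv ℝ (fun z => v z i) x) x :=
    HasFDerivAt.fun_sum fun i _ => (hv i).hasFDerivAt.mul_const (w i)
  rw [h.fderiv]
  simp only [_root_.sum_apply, _root_.smul_apply, smul_eq_mul, mul_comm]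

theorem fderiv_dotProduct_eq_sum_pd (hv : ∀ i, DifferentiableAt ℝ (fun z => v z i) x)
    (w u : Fin n → ℝ) : fderiv ℝ (fun z => v z ⬝ᵥ w) x u
      = ∑ j, ∑ k, pd (fun z => v z j) x k * w j * u k := by
  rw [fderiv_dotProduct hv]
  refine Finset.sum_congr rfl fun j _ => ?_
  rw [fderiv_apply_eq_pd_dotProduct, dotProduct, Finset.sum_mul]
  exact Finset.sum_congr rfl fun k _ => mul_right_comm _ _ _

theorem differentiableAt_mulVec_apply (hgg : ∀ i j, DifferentiableAt ℝ (fun z => gg z i j) x)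
    (w : Fin n → ℝ) (i : Fin n) : DifferentiableAt ℝ (fun z => (gg z *ᵥ w) i) x := by
  unfold mulVec dotProduct
  fun_prop

theorem fderiv_mulVec_apply (hgg : ∀ i j, DifferentiableAt ℝ (fun z => gg z i j) x)
    (w u : Fin n → ℝ) (i : Fin n) :
    fderiv ℝ (fun z => (gg z *ᵥ w) i) x u = ∑ j, ∑ k, pd (fun z => gg z i j) x k * w j * u k :=
  fderiv_dotProduct_eq_sum_pd (hgg i) w u

theorem pd_mulVec_dotProduct (hgg : ∀ i j, DifferentiableAt ℝ (fun z => gg z i j) x)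
    (w : Fin n → ℝ) (l : Fin n) :
    pd (fun z => (gg z *ᵥ w) ⬝ᵥ w) x l =
      ∑ j, ∑ k, pd (fun z => gg z j k) x l * w j * w k := by
  refine (fderiv_dotProduct (differentiableAt_mulVec_apply hgg w) w (Pi.single l 1)).trans
    (Finset.sum_congr rfl fun j _ => ?_)
  refine (congrArg (· * w j) (fderiv_dotProduct (hgg j) w (Pi.single l 1))).trans ?_
  rw [Finset.sum_mul]
  exact Finset.sum_congr rfl fun k _ => mul_right_comm _ _ _

theorem geodesicCovec_eq_fderiv_sub_pd (hsymm : ∀ᶠ z in 𝓝 x, (gg z).IsSymm)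
    (hgg : ∀ i j, DifferentiableAt ℝ (fun z => gg z i j) x) (y : Fin n → ℝ) (l : Fin n) :
    geodesicCovec gg x y l = 2 * fderiv ℝ (fun z => (gg z *ᵥ y) l) x y
      - pd (fun z => (gg z *ᵥ y) ⬝ᵥ y) x l := by
  have hswap : ∀ j k, pd (fun z => gg z j l) x k = pd (fun z => gg z l j) x k := fun j k =>
    pd_congr (hsymm.mono fun z hz => hz.apply l j) k
  have hsnd : ∑ j, ∑ k, pd (fun z => gg z l k) x j * y j * y k
      = fderiv ℝ (fun z => (gg z *ᵥ y) l) x y := by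
    rw [fderiv_mulVec_apply hgg, Finset.sum_comm]
    simp only [mul_right_comm]
  simp only [geodesicCovec, hswap, sub_mul, add_mul, Finset.sum_sub_distrib,
    Finset.sum_add_distrib, hsnd, ← fderiv_mulVec_apply hgg, ← pd_mulVec_dotProduct hgg]
  ring

/- With `gg = g(·, y)`, the hypothesis `hhom` is Euler's identity `g_{ij} y^j = F ∂F/∂y^i`; the
conclusion is the Euler-Lagrange covector of `F²`. -/
theorem geodesicCovec_of_mulVec_eq_smul {F : (Fin n → ℝ) → ℝ} {L : (Fin n → ℝ) → Fin n → ℝ}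
    (hsymm : ∀ᶠ z in 𝓝 x, (gg z).IsSymm)
    (hgg : ∀ i j, DifferentiableAt ℝ (fun z => gg z i j) x)
    (hF : DifferentiableAt ℝ F x) (hL : ∀ i, DifferentiableAt ℝ (fun z => L z i) x)
    (hhom : ∀ᶠ z in 𝓝 x, gg z *ᵥ y = F z • L z) (hLy : ∀ᶠ z in 𝓝 x, L z ⬝ᵥ y = F z)
    (l : Fin n) :
    geodesicCovec gg x y l = 2 * (fderiv ℝ F x y * L x l
      + F x * (fderiv ℝ (fun z => L z l) x y - pd F x l)) := by
  have hmul : (fun z => (gg z *ᵥ y) l) =ᶠ[𝓝 x] fun z => F z * L z l :=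
    hhom.mono fun z hz => congrFun hz l
  have hsq : (fun z => (gg z *ᵥ y) ⬝ᵥ y) =ᶠ[𝓝 x] fun z => F z * F z := by
    filter_upwards [hhom, hLy] with z hz hz'
    rw [hz, smul_dotProduct, hz', smul_eq_mul]
  rw [geodesicCovec_eq_fderiv_sub_pd hsymm hgg, hmul.fderiv_eq, pd_congr hsq,
    (hF.hasFDerivAt.fun_mul (hL l).hasFDerivAt).fderiv,
    pd_of_hasFDerivAt (hF.hasFDerivAt.fun_mul hF.hasFDerivAt)]
  simp only [_root_.add_apply, _root_.smul_apply, smul_eq_mul, pd]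
  ring

end GeodesicCovector

section RiemannianSpray

variable {n : ℕ} {a : (Fin n → ℝ) → Matrix (Fin n) (Fin n) ℝ} {u v : (Fin n → ℝ) → Fin n → ℝ}
  {x y : Fin n → ℝ}

theorem alphaG_eq (hsymm : ∀ᶠ z in 𝓝 x, (a z).IsSymm) (y : Fin n → ℝ) :
    alphaG a x y = (1 / 4 : ℝ) • (a x)⁻¹ *ᵥ geodesicCovec a x y := by
  have hswap : ∀ l k j, pd (fun z => a z l k) x j = pd (fun z => a z k l) x j := fun l k j =>
    pd_congr (hsymm.mono fun z hz => hz.apply k l) j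
  ext i
  simp only [alphaG, chr, geodesicCovec, Pi.smul_apply, smul_eq_mul, mulVec, dotProduct,
    Finset.mul_sum, Finset.sum_mul]
  rw [Finset.sum_comm_cycle]
  refine Finset.sum_congr rfl fun l _ => Finset.sum_congr rfl fun j _ =>
    Finset.sum_congr rfl fun k _ => ?_
  rw [hswap l k j]
  ring

theorem geodesicCovec_eq_mulVec_alphaG (hsymm : ∀ᶠ z in 𝓝 x, (a z).IsSymm)
    (hd : IsUnit (a x).det) (y : Fin n → ℝ) :
    geodesicCovec a x y = (4 : ℝ) • a x *ᵥ alphaG a x y := by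
  rw [alphaG_eq hsymm, mulVec_smul, mulVec_inv_mulVec hd, smul_smul]
  norm_num

theorem chr_comm (hsymm : ∀ᶠ z in 𝓝 x, (a z).IsSymm) (k i j : Fin n) :
    chr a x k i j = chr a x k j i := by
  have hswap : ∀ l, pd (fun z => a z i j) x l = pd (fun z => a z j i) x l := fun l =>
    pd_congr (hsymm.mono fun z hz => hz.apply j i) l
  simp only [chr, hswap]
  simp only [add_comm]

theorem r00_eq (hv : ∀ i, DifferentiableAt ℝ (fun z => v z i) x) :
    r00 a v x y = fderiv ℝ (fun z => oneForm (v z) y) x y - 2 * (v x ⬝ᵥ alphaG a x y) := by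
  have hcov : r00 a v x y = ∑ i, ∑ j, covD a v x i j * y i * y j := by
    have hswap : ∑ i, ∑ j, covD a v x j i * y i * y j = ∑ i, ∑ j, covD a v x i j * y i * y j := by
      rw [Finset.sum_comm]
      simp only [mul_right_comm]
    simp only [r00, rSym, mul_add, add_mul, Finset.sum_add_distrib, mul_assoc, ← Finset.mul_sum]
    simp only [← mul_assoc, hswap]
    ring
  have hder : fderiv ℝ (fun z => oneForm (v z) y) x y
      = ∑ i, ∑ j, pd (fun z => v z i) x j * y i * y j := fderiv_dotProduct_eq_sum_pd hv y y
  have hchr : 2 * (v x ⬝ᵥ alphaG a x y)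
      = ∑ i, ∑ j, (∑ k, v x k * chr a x k i j) * y i * y j := by
    simp only [dotProduct, alphaG, Finset.mul_sum, Finset.sum_mul]
    rw [← Finset.sum_comm_cycle]
    refine Finset.sum_congr rfl fun i _ => Finset.sum_congr rfl fun j _ =>
      Finset.sum_congr rfl fun k _ => ?_
    ring
  simp only [hcov, hder, hchr, covD, sub_mul, Finset.sum_sub_distrib]

theorem s0low_eq (hsymm : ∀ᶠ z in 𝓝 x, (a z).IsSymm)
    (hv : ∀ i, DifferentiableAt ℝ (fun z => v z i) x) (j : Fin n) :
    s0low a v x y j = (1 / 2) *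
      (fderiv ℝ (fun z => v z j) x y - pd (fun z => oneForm (v z) y) x j) := by
  have hpd : pd (fun z => oneForm (v z) y) x j = ∑ k, pd (fun z => v z k) x j * y k :=
    fderiv_dotProduct hv y (Pi.single j 1)
  have hs : ∀ k, sSym a v x j k = (1 / 2) * (pd (fun z => v z j) x k - pd (fun z => v z k) x j) :=
    fun k => by
      simp only [sSym, covD, chr_comm hsymm _ k j]
      ring
  rw [fderiv_apply_eq_pd_dotProduct, hpd, dotProduct, ← Finset.sum_sub_distrib, Finset.mul_sum,
    s0low]
  refine Finset.sum_congr rfl fun k _ => ?_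
  rw [hs]
  ring

theorem s0low_dotProduct_self : s0low a v x y ⬝ᵥ y = 0 := by
  have hskew : s0low a v x y ⬝ᵥ y = -(s0low a v x y ⬝ᵥ y) := by
    simp only [dotProduct, s0low, Finset.sum_mul, ← Finset.sum_neg_distrib]
    rw [Finset.sum_comm]
    refine Finset.sum_congr rfl fun i _ => Finset.sum_congr rfl fun j _ => ?_
    simp only [sSym]
    ring
  linarith

theorem sUp0_eq (a : (Fin n → ℝ) → Matrix (Fin n) (Fin n) ℝ) (v : (Fin n → ℝ) → Fin n → ℝ)
    (x y : Fin n → ℝ) : sUp0 a v x y = (a x)⁻¹ *ᵥ s0low a v x y := rfl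

theorem pd_alph_dotProduct_sUp0 (hsymm : (a x).IsSymm) (hd : IsUnit (a x).det)
    (hy : 0 < alph (a x) y) : pd (alph (a x)) y ⬝ᵥ sUp0 a v x y = 0 := by
  rw [sUp0_eq, pd_alph_dotProduct_inv_mulVec hsymm hd hy, sVar]
  exact div_eq_zero_iff.mpr (.inl s0low_dotProduct_self)

theorem hl_dotProduct_sUp0 (hsymm : (a x).IsSymm) (hd : IsUnit (a x).det)
    (hy : 0 < alph (a x) y) : hl (a x) (u x) y ⬝ᵥ sUp0 a v x y = contrS a v u x y := by
  rw [hl_eq, sub_dotProduct, smul_dotProduct, pd_alph_dotProduct_sUp0 hsymm hd hy, smul_zero,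
    sub_zero]
  rfl

end RiemannianSpray

section BaseVariable

variable {n : ℕ} {a : (Fin n → ℝ) → Matrix (Fin n) (Fin n) ℝ} {bv gv v : (Fin n → ℝ) → Fin n → ℝ}
  {x y : Fin n → ℝ} {Ψ : ℝ → ℝ → ℝ}

theorem differentiableAt_alph_base (ha : ∀ i j, DifferentiableAt ℝ (fun z => a z i j) x)
    (hy : 0 < alph (a x) y) : DifferentiableAt ℝ (fun z => alph (a z) y) x := by
  unfold alph
  exact DifferentiableAt.sqrt (by fun_prop) (Real.sqrt_pos.mp hy).ne'

theorem differentiableAt_oneForm_base (hv : ∀ i, DifferentiableAt ℝ (fun z => v z i) x) :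
    DifferentiableAt ℝ (fun z => oneForm (v z) y) x := by
  unfold oneForm
  fun_prop

theorem hasFDerivAt_sVar_base (ha : ∀ i j, DifferentiableAt ℝ (fun z => a z i j) x)
    (hv : ∀ i, DifferentiableAt ℝ (fun z => v z i) x) (hy : 0 < alph (a x) y) :
    HasFDerivAt (fun z => sVar (a z) (v z) y)
      ((alph (a x) y)⁻¹ • (fderiv ℝ (fun z => oneForm (v z) y) x
        - sVar (a x) (v x) y • fderiv ℝ (fun z => alph (a z) y) x)) x :=
  hasFDerivAt_div_eq (differentiableAt_oneForm_base hv).hasFDerivAt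
    (differentiableAt_alph_base ha hy).hasFDerivAt hy.ne'

theorem eventually_base (hsymm : ∀ᶠ z in 𝓝 x, (a z).IsSymm)
    (ha : ∀ i j, DifferentiableAt ℝ (fun z => a z i j) x) (hy : 0 < alph (a x) y) :
    ∀ᶠ z in 𝓝 x, (a z).IsSymm ∧ 0 < alph (a z) y :=
  hsymm.and ((differentiableAt_alph_base ha hy).continuousAt.eventually_const_lt hy)

theorem eventually_sVar_base (ha : ∀ i j, DifferentiableAt ℝ (fun z => a z i j) x)
    (hb : ∀ i, DifferentiableAt ℝ (fun z => bv z i) x)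
    (hg : ∀ i, DifferentiableAt ℝ (fun z => gv z i) x) (hy : 0 < alph (a x) y) {P : ℝ × ℝ → Prop}
    (hP : ∀ᶠ p in 𝓝 (sVar (a x) (bv x) y, sVar (a x) (gv x) y), P p) :
    ∀ᶠ z in 𝓝 x, P (sVar (a z) (bv z) y, sVar (a z) (gv z) y) :=
  ((hasFDerivAt_sVar_base ha hb hy).continuousAt.prodMk
    (hasFDerivAt_sVar_base ha hg hy).continuousAt).eventually hP

theorem differentiableAt_pd_alph_base (hsymm : ∀ᶠ z in 𝓝 x, (a z).IsSymm)
    (ha : ∀ i j, DifferentiableAt ℝ (fun z => a z i j) x) (hy : 0 < alph (a x) y) (l : Fin n) :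
    DifferentiableAt ℝ (fun z => pd (alph (a z)) y l) x :=
  (hasFDerivAt_sVar_base (v := fun z => (a z).row l) ha (ha l) hy).differentiableAt
    |>.congr_of_eventuallyEq <| (eventually_base hsymm ha hy).mono fun _ hz => pd_alph hz.1 hz.2 l

theorem geodesicCovec_alph (hsymm : ∀ᶠ z in 𝓝 x, (a z).IsSymm)
    (ha : ∀ i j, DifferentiableAt ℝ (fun z => a z i j) x) (hy : 0 < alph (a x) y) (l : Fin n) :
    geodesicCovec a x y l =
      2 * (fderiv ℝ (fun z => alph (a z) y) x y * pd (alph (a x)) y l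
        + alph (a x) y * (fderiv ℝ (fun z => pd (alph (a z)) y l) x y
          - pd (fun z => alph (a z) y) x l)) :=
  geodesicCovec_of_mulVec_eq_smul (L := fun z => pd (alph (a z)) y) hsymm ha
    (differentiableAt_alph_base ha hy) (differentiableAt_pd_alph_base hsymm ha hy)
    ((eventually_base hsymm ha hy).mono fun _ hz => mulVec_eq_alph_smul_pd hz.1 hz.2)
    ((eventually_base hsymm ha hy).mono fun _ hz => pd_alph_dotProduct_self hz.1 hz.2) l

theorem fderiv_alph_base (hsymm : ∀ᶠ z in 𝓝 x, (a z).IsSymm) (hd : IsUnit (a x).det)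
    (ha : ∀ i j, DifferentiableAt ℝ (fun z => a z i j) x) (hy : 0 < alph (a x) y) :
    fderiv ℝ (fun z => alph (a z) y) x y = 2 * (pd (alph (a x)) y ⬝ᵥ alphaG a x y) := by
  have hℓ : ∑ l, fderiv ℝ (fun z => pd (alph (a z)) y l) x y * y l
      = fderiv ℝ (fun z => alph (a z) y) x y := by
    have heq : (fun z => pd (alph (a z)) y ⬝ᵥ y) =ᶠ[𝓝 x] fun z => alph (a z) y :=
      (eventually_base hsymm ha hy).mono fun _ hz => pd_alph_dotProduct_self hz.1 hz.2
    rw [← heq.fderiv_eq]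
    exact (fderiv_dotProduct (differentiableAt_pd_alph_base hsymm ha hy) y y).symm
  have hcov : geodesicCovec a x y ⬝ᵥ y
      = 2 * (alph (a x) y * fderiv ℝ (fun z => alph (a z) y) x y) := by
    have hA := fderiv_apply_eq_pd_dotProduct (fun z => alph (a z) y) x y
    have hself := pd_alph_dotProduct_self hsymm.self_of_nhds hy
    simp only [dotProduct] at hA hself ⊢
    simp only [geodesicCovec_alph hsymm ha hy, mul_assoc, add_mul, sub_mul, mul_add, mul_sub,
      Finset.sum_add_distrib, Finset.sum_sub_distrib, ← Finset.mul_sum, hℓ, hself, ← hA]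
    ring
  rw [geodesicCovec_eq_mulVec_alphaG hsymm hd, smul_dotProduct, dotProduct_comm,
    dotProduct_mulVec, ← mulVec_transpose, hsymm.self_of_nhds.eq,
    mulVec_eq_alph_smul_pd hsymm.self_of_nhds hy, smul_dotProduct, smul_eq_mul, smul_eq_mul] at hcov
  refine mul_left_cancel₀ hy.ne' ?_
  linarith

theorem alph_mul_fderiv_pd_alph_sub (hsymm : ∀ᶠ z in 𝓝 x, (a z).IsSymm) (hd : IsUnit (a x).det)
    (ha : ∀ i j, DifferentiableAt ℝ (fun z => a z i j) x) (hy : 0 < alph (a x) y) (l : Fin n) :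
    alph (a x) y * (fderiv ℝ (fun z => pd (alph (a z)) y l) x y - pd (fun z => alph (a z) y) x l)
      = 2 * (a x *ᵥ alphaG a x y
        - (pd (alph (a x)) y ⬝ᵥ alphaG a x y) • pd (alph (a x)) y) l := by
  have h := geodesicCovec_alph hsymm ha hy l
  rw [geodesicCovec_eq_mulVec_alphaG hsymm hd, fderiv_alph_base hsymm hd ha hy] at h
  simp only [Pi.sub_apply, Pi.smul_apply, smul_eq_mul] at h ⊢
  linarith

theorem fderiv_oneForm_base (hv : ∀ i, DifferentiableAt ℝ (fun z => v z i) x) :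
    fderiv ℝ (fun z => oneForm (v z) y) x y = r00 a v x y + 2 * (v x ⬝ᵥ alphaG a x y) := by
  rw [r00_eq hv, sub_add_cancel]

theorem fderiv_sVar_base (hsymm : ∀ᶠ z in 𝓝 x, (a z).IsSymm) (hd : IsUnit (a x).det)
    (ha : ∀ i j, DifferentiableAt ℝ (fun z => a z i j) x)
    (hv : ∀ i, DifferentiableAt ℝ (fun z => v z i) x) (hy : 0 < alph (a x) y) :
    fderiv ℝ (fun z => sVar (a z) (v z) y) x y =
      (alph (a x) y)⁻¹ * (r00 a v x y + 2 * (hl (a x) (v x) y ⬝ᵥ alphaG a x y)) := by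
  rw [(hasFDerivAt_sVar_base ha hv hy).fderiv]
  simp only [_root_.smul_apply, _root_.sub_apply, smul_eq_mul, fderiv_alph_base hsymm hd ha hy,
    fderiv_oneForm_base (a := a) hv, hl_eq, sub_dotProduct, smul_dotProduct]
  ring

end BaseVariable

section FinslerSpray

variable {n : ℕ} {a : (Fin n → ℝ) → Matrix (Fin n) (Fin n) ℝ} {bv gv : (Fin n → ℝ) → Fin n → ℝ}
  {x y : Fin n → ℝ} {Ψ : ℝ → ℝ → ℝ}

theorem pd_Fm_eventuallyEq_base
    (ha : ∀ i j, DifferentiableAt ℝ (fun z => a z i j) x)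
    (hb : ∀ i, DifferentiableAt ℝ (fun z => bv z i) x)
    (hg : ∀ i, DifferentiableAt ℝ (fun z => gv z i) x) (hy : 0 < alph (a x) y)
    (hΨ : ContDiffAt ℝ 2 (uncurry Ψ) (sVar (a x) (bv x) y, sVar (a x) (gv x) y)) (l : Fin n) :
    (fun z => pd (Fm (a z) (bv z) (gv z) Ψ) y l) =ᶠ[𝓝 x] fun z =>
      PiF Ψ (sVar (a z) (bv z) y) (sVar (a z) (gv z) y) * pd (alph (a z)) y l
        + Ds Ψ (sVar (a z) (bv z) y) (sVar (a z) (gv z) y) * bv z l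
        + Dt Ψ (sVar (a z) (bv z) y) (sVar (a z) (gv z) y) * gv z l := by
  filter_upwards [(differentiableAt_alph_base ha hy).continuousAt.eventually_const_lt hy,
    eventually_sVar_base ha hb hg hy (eventually_differentiableAt_of_contDiffAt hΨ one_le_two)]
    with z hz hΨz using pd_Fm hz hΨz l

theorem hasFDerivAt_Fm_base (ha : ∀ i j, DifferentiableAt ℝ (fun z => a z i j) x)
    (hb : ∀ i, DifferentiableAt ℝ (fun z => bv z i) x)
    (hg : ∀ i, DifferentiableAt ℝ (fun z => gv z i) x) (hy : 0 < alph (a x) y)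
    (hΨ : DifferentiableAt ℝ (uncurry Ψ) (sVar (a x) (bv x) y, sVar (a x) (gv x) y)) :
    HasFDerivAt (fun z => Fm (a z) (bv z) (gv z) Ψ y)
      (PiF Ψ (sVar (a x) (bv x) y) (sVar (a x) (gv x) y) • fderiv ℝ (fun z => alph (a z) y) x
        + Ds Ψ (sVar (a x) (bv x) y) (sVar (a x) (gv x) y) •
            fderiv ℝ (fun z => oneForm (bv z) y) x
        + Dt Ψ (sVar (a x) (bv x) y) (sVar (a x) (gv x) y) •
            fderiv ℝ (fun z => oneForm (gv z) y) x) x :=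
  hasFDerivAt_mul_comp_ratios hΨ (differentiableAt_alph_base ha hy).hasFDerivAt
    (differentiableAt_oneForm_base hb).hasFDerivAt (differentiableAt_oneForm_base hg).hasFDerivAt
    hy.ne'

theorem hasFDerivAt_pd_Fm_base (hsymm : ∀ᶠ z in 𝓝 x, (a z).IsSymm)
    (ha : ∀ i j, DifferentiableAt ℝ (fun z => a z i j) x)
    (hb : ∀ i, DifferentiableAt ℝ (fun z => bv z i) x)
    (hg : ∀ i, DifferentiableAt ℝ (fun z => gv z i) x) (hy : 0 < alph (a x) y)
    (hΨ : ContDiffAt ℝ 2 (uncurry Ψ) (sVar (a x) (bv x) y, sVar (a x) (gv x) y)) (l : Fin n) :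
    HasFDerivAt (fun z => pd (Fm (a z) (bv z) (gv z) Ψ) y l)
      (PiF Ψ (sVar (a x) (bv x) y) (sVar (a x) (gv x) y) •
          fderiv ℝ (fun z => pd (alph (a z)) y l) x
        + Ds Ψ (sVar (a x) (bv x) y) (sVar (a x) (gv x) y) • fderiv ℝ (fun z => bv z l) x
        + Dt Ψ (sVar (a x) (bv x) y) (sVar (a x) (gv x) y) • fderiv ℝ (fun z => gv z l) x
        + (hl (a x) (bv x) y l •
            (Ds (Ds Ψ) (sVar (a x) (bv x) y) (sVar (a x) (gv x) y) •
                fderiv ℝ (fun z => sVar (a z) (bv z) y) x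
              + Dt (Ds Ψ) (sVar (a x) (bv x) y) (sVar (a x) (gv x) y) •
                fderiv ℝ (fun z => sVar (a z) (gv z) y) x)
          + hl (a x) (gv x) y l •
            (Dt (Ds Ψ) (sVar (a x) (bv x) y) (sVar (a x) (gv x) y) •
                fderiv ℝ (fun z => sVar (a z) (bv z) y) x
              + Dt (Dt Ψ) (sVar (a x) (bv x) y) (sVar (a x) (gv x) y) •
                fderiv ℝ (fun z => sVar (a z) (gv z) y) x))) x :=
  (hasFDerivAt_PiF_mul_add (s := fun z => sVar (a z) (bv z) y) (t := fun z => sVar (a z) (gv z) y)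
    hΨ (hasFDerivAt_sVar_base ha hb hy).differentiableAt.hasFDerivAt
    (hasFDerivAt_sVar_base ha hg hy).differentiableAt.hasFDerivAt
    (differentiableAt_pd_alph_base hsymm ha hy l).hasFDerivAt (hb l).hasFDerivAt
    (hg l).hasFDerivAt).congr_of_eventuallyEq (pd_Fm_eventuallyEq_base ha hb hg hy hΨ l)

theorem differentiableAt_fundMat_base (hsymm : ∀ᶠ z in 𝓝 x, (a z).IsSymm)
    (ha : ∀ i j, DifferentiableAt ℝ (fun z => a z i j) x)
    (hb : ∀ i, DifferentiableAt ℝ (fun z => bv z i) x)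
    (hg : ∀ i, DifferentiableAt ℝ (fun z => gv z i) x) (hy : 0 < alph (a x) y)
    (hΨ : ContDiffAt ℝ 3 (uncurry Ψ) (sVar (a x) (bv x) y, sVar (a x) (gv x) y)) (i j : Fin n) :
    DifferentiableAt ℝ (fun z => fundMat (a z) (bv z) (gv z) Ψ y i j) x := by
  have hΨ₂ := hΨ.of_le (m := 2) (by norm_num)
  have hs := (hasFDerivAt_sVar_base ha hb hy).differentiableAt
  have ht := (hasFDerivAt_sVar_base ha hg hy).differentiableAt
  have hcomp : ∀ {f : ℝ → ℝ → ℝ},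
      DifferentiableAt ℝ (uncurry f) (sVar (a x) (bv x) y, sVar (a x) (gv x) y) →
      DifferentiableAt ℝ (fun z => f (sVar (a z) (bv z) y) (sVar (a z) (gv z) y)) x :=
    fun hf => (hasFDerivAt_comp_two
      (s := fun z => sVar (a z) (bv z) y) (t := fun z => sVar (a z) (gv z) y)
      hf hs.hasFDerivAt ht.hasFDerivAt).differentiableAt
  have hΨs := contDiffAt_Ds hΨ two_add_one_eq_three.le
  have hΨt := contDiffAt_Dt hΨ two_add_one_eq_three.le
  have h₀ := hcomp (hΨ.differentiableAt three_ne_zero)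
  have hPi := (hasFDerivAt_PiF_comp
    (s := fun z => sVar (a z) (bv z) y) (t := fun z => sVar (a z) (gv z) y)
    hΨ₂ hs.hasFDerivAt ht.hasFDerivAt).differentiableAt
  have hss := hcomp (differentiableAt_Ds hΨs)
  have hst := hcomp (differentiableAt_Dt hΨs)
  have htt := hcomp (differentiableAt_Dt hΨt)
  have hℓ := differentiableAt_pd_alph_base hsymm ha hy
  have hdF := fun i => (hasFDerivAt_pd_Fm_base hsymm ha hb hg hy hΨ₂ i).differentiableAt
  have hh : ∀ i, DifferentiableAt ℝ (fun z => hl (a z) (bv z) y i) x := fun i =>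
    (hb i).sub (hs.mul (hℓ i))
  have hk : ∀ i, DifferentiableAt ℝ (fun z => hl (a z) (gv z) y i) x := fun i =>
    (hg i).sub (ht.mul (hℓ i))
  exact (h₀.mul ((hPi.mul ((ha i j).sub ((hℓ i).mul (hℓ j)))).add
    ((((hss.mul (hh i)).add (hst.mul (hk i))).mul (hh j)).add
      (((hst.mul (hh i)).add (htt.mul (hk i))).mul (hk j))))).add ((hdF i).mul (hdF j))

theorem gmatF_Fm_eventuallyEq (hsymm : ∀ᶠ z in 𝓝 x, (a z).IsSymm)
    (ha : ∀ i j, DifferentiableAt ℝ (fun z => a z i j) x)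
    (hb : ∀ i, DifferentiableAt ℝ (fun z => bv z i) x)
    (hg : ∀ i, DifferentiableAt ℝ (fun z => gv z i) x) (hy : 0 < alph (a x) y)
    (hΨ : ContDiffAt ℝ 2 (uncurry Ψ) (sVar (a x) (bv x) y, sVar (a x) (gv x) y)) :
    (fun z => gmatF (fun z w => Fm (a z) (bv z) (gv z) Ψ w) z y) =ᶠ[𝓝 x]
      fun z => fundMat (a z) (bv z) (gv z) Ψ y := by
  filter_upwards [eventually_base hsymm ha hy,
    eventually_sVar_base ha hb hg hy (hΨ.eventually (by simp))] with z hz hΨz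
  exact Matrix.ext fun i j => fundT_Fm hz.1 hz.2 hΨz i j

theorem geodesicCovec_fundMat (hsymm : ∀ᶠ z in 𝓝 x, (a z).IsSymm)
    (ha : ∀ i j, DifferentiableAt ℝ (fun z => a z i j) x)
    (hb : ∀ i, DifferentiableAt ℝ (fun z => bv z i) x)
    (hg : ∀ i, DifferentiableAt ℝ (fun z => gv z i) x) (hy : 0 < alph (a x) y)
    (hΨ : ContDiffAt ℝ 3 (uncurry Ψ) (sVar (a x) (bv x) y, sVar (a x) (gv x) y)) (l : Fin n) :
    geodesicCovec (fun z => fundMat (a z) (bv z) (gv z) Ψ y) x y l =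
      2 * (fderiv ℝ (fun z => Fm (a z) (bv z) (gv z) Ψ y) x y
          * pd (Fm (a x) (bv x) (gv x) Ψ) y l
        + Fm (a x) (bv x) (gv x) Ψ y
          * (fderiv ℝ (fun z => pd (Fm (a z) (bv z) (gv z) Ψ) y l) x y
            - pd (fun z => Fm (a z) (bv z) (gv z) Ψ y) x l)) := by
  have hΨ₂ := hΨ.of_le (m := 2) (by norm_num)
  have hev := (eventually_base hsymm ha hy).and (eventually_sVar_base ha hb hg hy
    (eventually_differentiableAt_of_contDiffAt hΨ₂ one_le_two))
  exact geodesicCovec_of_mulVec_eq_smul (L := fun z => pd (Fm (a z) (bv z) (gv z) Ψ) y)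
    (hsymm.mono fun _ hz => isSymm_fundMat hz)
    (differentiableAt_fundMat_base hsymm ha hb hg hy hΨ)
    (hasFDerivAt_Fm_base ha hb hg hy (hΨ.differentiableAt three_ne_zero)).differentiableAt
    (fun i => (hasFDerivAt_pd_Fm_base hsymm ha hb hg hy hΨ₂ i).differentiableAt)
    (hev.mono fun _ hz => fundMat_mulVec_self hz.1.1 hz.1.2 hz.2)
    (hev.mono fun _ hz => pd_Fm_dotProduct_self hz.1.1 hz.1.2 hz.2) l

theorem fderiv_Fm_base (hsymm : ∀ᶠ z in 𝓝 x, (a z).IsSymm) (hd : IsUnit (a x).det)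
    (ha : ∀ i j, DifferentiableAt ℝ (fun z => a z i j) x)
    (hb : ∀ i, DifferentiableAt ℝ (fun z => bv z i) x)
    (hg : ∀ i, DifferentiableAt ℝ (fun z => gv z i) x) (hy : 0 < alph (a x) y)
    (hΨ : DifferentiableAt ℝ (uncurry Ψ) (sVar (a x) (bv x) y, sVar (a x) (gv x) y)) :
    fderiv ℝ (fun z => Fm (a z) (bv z) (gv z) Ψ y) x y =
      2 * (pd (Fm (a x) (bv x) (gv x) Ψ) y ⬝ᵥ alphaG a x y)
        + Ds Ψ (sVar (a x) (bv x) y) (sVar (a x) (gv x) y) * r00 a bv x y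
        + Dt Ψ (sVar (a x) (bv x) y) (sVar (a x) (gv x) y) * r00 a gv x y := by
  rw [(hasFDerivAt_Fm_base ha hb hg hy hΨ).fderiv, pd_Fm_dotProduct hy hΨ]
  simp only [_root_.add_apply, _root_.smul_apply, smul_eq_mul, fderiv_alph_base hsymm hd ha hy,
    fderiv_oneForm_base (a := a) hb, fderiv_oneForm_base (a := a) hg, hl_eq, sub_dotProduct,
    smul_dotProduct, PiF]
  ring

theorem Fm_mul_fderiv_pd_Fm_sub (hsymm : ∀ᶠ z in 𝓝 x, (a z).IsSymm) (hd : IsUnit (a x).det)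
    (ha : ∀ i j, DifferentiableAt ℝ (fun z => a z i j) x)
    (hb : ∀ i, DifferentiableAt ℝ (fun z => bv z i) x)
    (hg : ∀ i, DifferentiableAt ℝ (fun z => gv z i) x) (hy : 0 < alph (a x) y)
    (hΨ : ContDiffAt ℝ 2 (uncurry Ψ) (sVar (a x) (bv x) y, sVar (a x) (gv x) y)) (l : Fin n) :
    Fm (a x) (bv x) (gv x) Ψ y * (fderiv ℝ (fun z => pd (Fm (a z) (bv z) (gv z) Ψ) y l) x y
        - pd (fun z => Fm (a z) (bv z) (gv z) Ψ y) x l) =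
      Ψ (sVar (a x) (bv x) y) (sVar (a x) (gv x) y) *
        (2 * PiF Ψ (sVar (a x) (bv x) y) (sVar (a x) (gv x) y) *
            (a x *ᵥ alphaG a x y
              - (pd (alph (a x)) y ⬝ᵥ alphaG a x y) • pd (alph (a x)) y) l
          + 2 * alph (a x) y *
            (Ds Ψ (sVar (a x) (bv x) y) (sVar (a x) (gv x) y) * s0low a bv x y l
              + Dt Ψ (sVar (a x) (bv x) y) (sVar (a x) (gv x) y) * s0low a gv x y l)
          + hessCov Ψ (sVar (a x) (bv x) y) (sVar (a x) (gv x) y)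
              (r00 a bv x y + 2 * (hl (a x) (bv x) y ⬝ᵥ alphaG a x y))
              (r00 a gv x y + 2 * (hl (a x) (gv x) y ⬝ᵥ alphaG a x y))
              (hl (a x) (bv x) y) (hl (a x) (gv x) y) l) := by
  have hα := alph_mul_fderiv_pd_alph_sub hsymm hd ha hy l
  rw [pd_of_hasFDerivAt (hasFDerivAt_Fm_base ha hb hg hy (hΨ.differentiableAt two_ne_zero)),
    (hasFDerivAt_pd_Fm_base hsymm ha hb hg hy hΨ l).fderiv, s0low_eq hsymm hb, s0low_eq hsymm hg]
  simp only [_root_.add_apply, _root_.smul_apply, smul_eq_mul, hessCov, Pi.add_apply,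
    Pi.smul_apply, fderiv_sVar_base hsymm hd ha hb hy, fderiv_sVar_base hsymm hd ha hg hy, Fm,
    pd] at hα ⊢
  field_simp
  linear_combination Ψ (sVar (a x) (bv x) y) (sVar (a x) (gv x) y)
    * PiF Ψ (sVar (a x) (bv x) y) (sVar (a x) (gv x) y) * hα

theorem geodesicCovec_fundMat_eq (hsymm : ∀ᶠ z in 𝓝 x, (a z).IsSymm) (hd : IsUnit (a x).det)
    (ha : ∀ i j, DifferentiableAt ℝ (fun z => a z i j) x)
    (hb : ∀ i, DifferentiableAt ℝ (fun z => bv z i) x)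
    (hg : ∀ i, DifferentiableAt ℝ (fun z => gv z i) x) (hy : 0 < alph (a x) y)
    (hΨ : ContDiffAt ℝ 3 (uncurry Ψ) (sVar (a x) (bv x) y, sVar (a x) (gv x) y)) :
    geodesicCovec (fun z => fundMat (a z) (bv z) (gv z) Ψ y) x y =
      (4 : ℝ) • fundMat (a x) (bv x) (gv x) Ψ y *ᵥ alphaG a x y
        + (2 : ℝ) •
          ((Ds Ψ (sVar (a x) (bv x) y) (sVar (a x) (gv x) y) * r00 a bv x y
              + Dt Ψ (sVar (a x) (bv x) y) (sVar (a x) (gv x) y) * r00 a gv x y) •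
              pd (Fm (a x) (bv x) (gv x) Ψ) y
            + Ψ (sVar (a x) (bv x) y) (sVar (a x) (gv x) y) •
              hessCov Ψ (sVar (a x) (bv x) y) (sVar (a x) (gv x) y) (r00 a bv x y) (r00 a gv x y)
                (hl (a x) (bv x) y) (hl (a x) (gv x) y))
        + (4 * alph (a x) y * Ψ (sVar (a x) (bv x) y) (sVar (a x) (gv x) y)) •
          (Ds Ψ (sVar (a x) (bv x) y) (sVar (a x) (gv x) y) • s0low a bv x y
            + Dt Ψ (sVar (a x) (bv x) y) (sVar (a x) (gv x) y) • s0low a gv x y) := by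
  have hΨ₂ := hΨ.of_le (m := 2) (by norm_num)
  ext l
  rw [geodesicCovec_fundMat hsymm ha hb hg hy hΨ, Fm_mul_fderiv_pd_Fm_sub hsymm hd ha hb hg hy hΨ₂,
    fderiv_Fm_base hsymm hd ha hb hg hy (hΨ.differentiableAt three_ne_zero), fundMat_mulVec]
  simp only [hessCov, Pi.add_apply, Pi.smul_apply, smul_eq_mul]
  ring

/-- `R^β` for `v = β` and `R^γ` for `v = γ`. -/
def RF (a : (Fin n → ℝ) → Matrix (Fin n) (Fin n) ℝ) (bv gv : (Fin n → ℝ) → Fin n → ℝ)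
    (Ψ : ℝ → ℝ → ℝ) (v : (Fin n → ℝ) → Fin n → ℝ) (x y : Fin n → ℝ) : ℝ :=
  r00 a v x y
    - (2 * alph (a x) y / PiF Ψ (sVar (a x) (bv x) y) (sVar (a x) (gv x) y)) *
      (Ds Ψ (sVar (a x) (bv x) y) (sVar (a x) (gv x) y) * contrS a bv v x y
        + Dt Ψ (sVar (a x) (bv x) y) (sVar (a x) (gv x) y) * contrS a gv v x y)

/-- The vector `(α/Π) (Ψ_s ^βs^i_0 + Ψ_s̄ ^γs^i_0)`: the part of the spray that comes from the
exterior derivatives of the two 1-forms. -/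
def skewVec (a : (Fin n → ℝ) → Matrix (Fin n) (Fin n) ℝ) (bv gv : (Fin n → ℝ) → Fin n → ℝ)
    (Ψ : ℝ → ℝ → ℝ) (x y : Fin n → ℝ) : Fin n → ℝ :=
  (alph (a x) y / PiF Ψ (sVar (a x) (bv x) y) (sVar (a x) (gv x) y)) •
    (Ds Ψ (sVar (a x) (bv x) y) (sVar (a x) (gv x) y) • sUp0 a bv x y
      + Dt Ψ (sVar (a x) (bv x) y) (sVar (a x) (gv x) y) • sUp0 a gv x y)

theorem pd_alph_dotProduct_skewVec (hsymm : (a x).IsSymm) (hd : IsUnit (a x).det)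
    (hy : 0 < alph (a x) y) : pd (alph (a x)) y ⬝ᵥ skewVec a bv gv Ψ x y = 0 := by
  simp only [skewVec, dotProduct_smul, dotProduct_add, pd_alph_dotProduct_sUp0 hsymm hd hy,
    smul_zero, add_zero]

theorem hl_dotProduct_skewVec (hsymm : (a x).IsSymm) (hd : IsUnit (a x).det)
    (hy : 0 < alph (a x) y) (v : (Fin n → ℝ) → Fin n → ℝ) :
    hl (a x) (v x) y ⬝ᵥ skewVec a bv gv Ψ x y
      = (1 / 2) * (r00 a v x y - RF a bv gv Ψ v x y) := by
  simp only [skewVec, RF, dotProduct_smul, dotProduct_add, hl_dotProduct_sUp0 hsymm hd hy,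
    smul_eq_mul]
  ring

theorem PiF_smul_mulVec_skewVec (hd : IsUnit (a x).det)
    (hPi : PiF Ψ (sVar (a x) (bv x) y) (sVar (a x) (gv x) y) ≠ 0) :
    PiF Ψ (sVar (a x) (bv x) y) (sVar (a x) (gv x) y) • a x *ᵥ skewVec a bv gv Ψ x y
      = alph (a x) y •
        (Ds Ψ (sVar (a x) (bv x) y) (sVar (a x) (gv x) y) • s0low a bv x y
          + Dt Ψ (sVar (a x) (bv x) y) (sVar (a x) (gv x) y) • s0low a gv x y) := by
  simp only [skewVec, mulVec_smul, mulVec_add, sUp0_eq, mulVec_inv_mulVec hd, smul_smul,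
    mul_div_cancel₀ _ hPi]

theorem fundMat_mulVec_skewVec (hsymm : (a x).IsSymm) (hd : IsUnit (a x).det)
    (hy : 0 < alph (a x) y)
    (hΨ : DifferentiableAt ℝ (uncurry Ψ) (sVar (a x) (bv x) y, sVar (a x) (gv x) y))
    (hPi : PiF Ψ (sVar (a x) (bv x) y) (sVar (a x) (gv x) y) ≠ 0) :
    fundMat (a x) (bv x) (gv x) Ψ y *ᵥ skewVec a bv gv Ψ x y =
      (alph (a x) y * Ψ (sVar (a x) (bv x) y) (sVar (a x) (gv x) y)) •
          (Ds Ψ (sVar (a x) (bv x) y) (sVar (a x) (gv x) y) • s0low a bv x y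
            + Dt Ψ (sVar (a x) (bv x) y) (sVar (a x) (gv x) y) • s0low a gv x y)
        + (1 / 2 : ℝ) •
          ((Ds Ψ (sVar (a x) (bv x) y) (sVar (a x) (gv x) y)
                * (r00 a bv x y - RF a bv gv Ψ bv x y)
              + Dt Ψ (sVar (a x) (bv x) y) (sVar (a x) (gv x) y)
                * (r00 a gv x y - RF a bv gv Ψ gv x y)) • pd (Fm (a x) (bv x) (gv x) Ψ) y
            + Ψ (sVar (a x) (bv x) y) (sVar (a x) (gv x) y) •
              hessCov Ψ (sVar (a x) (bv x) y) (sVar (a x) (gv x) y)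
                (r00 a bv x y - RF a bv gv Ψ bv x y) (r00 a gv x y - RF a bv gv Ψ gv x y)
                (hl (a x) (bv x) y) (hl (a x) (gv x) y)) := by
  rw [fundMat_mulVec, pd_Fm_dotProduct hy hΨ, pd_alph_dotProduct_skewVec hsymm hd hy,
    hl_dotProduct_skewVec hsymm hd hy, hl_dotProduct_skewVec hsymm hd hy, zero_smul, sub_zero,
    PiF_smul_mulVec_skewVec hd hPi]
  ext i
  simp only [hessCov, Pi.add_apply, Pi.smul_apply, smul_eq_mul]
  ring

/-- The vector `(1/(2Γ)) (Γ₁ b^i + Γ₂ γ^i + (1/Ψ) Γ₃ α^i)`: the part of the spray that comes from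
the symmetrized covariant derivatives of the two 1-forms. -/
def symmVec (a : (Fin n → ℝ) → Matrix (Fin n) (Fin n) ℝ) (bv gv : (Fin n → ℝ) → Fin n → ℝ)
    (Ψ : ℝ → ℝ → ℝ) (x y : Fin n → ℝ) : Fin n → ℝ :=
  (1 / (2 * GammaF Ψ (quadInv (a x) (bv x) (bv x)) (quadInv (a x) (gv x) (gv x))
      (quadInv (a x) (bv x) (gv x)) (sVar (a x) (bv x) y) (sVar (a x) (gv x) y))) •
    frameVec (a x) (bv x) (gv x) y
      (Gamma1F Ψ (quadInv (a x) (gv x) (gv x)) (quadInv (a x) (bv x) (gv x))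
        (sVar (a x) (bv x) y) (sVar (a x) (gv x) y)
        (RF a bv gv Ψ bv x y) (RF a bv gv Ψ gv x y))
      (Gamma2F Ψ (quadInv (a x) (bv x) (bv x)) (quadInv (a x) (bv x) (gv x))
        (sVar (a x) (bv x) y) (sVar (a x) (gv x) y)
        (RF a bv gv Ψ bv x y) (RF a bv gv Ψ gv x y))
      (1 / Ψ (sVar (a x) (bv x) y) (sVar (a x) (gv x) y) *
        Gamma3F Ψ (quadInv (a x) (bv x) (bv x)) (quadInv (a x) (gv x) (gv x))
          (quadInv (a x) (bv x) (gv x)) (sVar (a x) (bv x) y) (sVar (a x) (gv x) y)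
          (RF a bv gv Ψ bv x y) (RF a bv gv Ψ gv x y))

theorem fundMat_mulVec_symmVec (hsymm : (a x).IsSymm) (hd : IsUnit (a x).det)
    (hy : 0 < alph (a x) y)
    (hΨ : DifferentiableAt ℝ (uncurry Ψ) (sVar (a x) (bv x) y, sVar (a x) (gv x) y))
    (hΨ0 : Ψ (sVar (a x) (bv x) y) (sVar (a x) (gv x) y) ≠ 0)
    (hPi : PiF Ψ (sVar (a x) (bv x) y) (sVar (a x) (gv x) y) ≠ 0)
    (hΓ : GammaF Ψ (quadInv (a x) (bv x) (bv x)) (quadInv (a x) (gv x) (gv x))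
      (quadInv (a x) (bv x) (gv x)) (sVar (a x) (bv x) y) (sVar (a x) (gv x) y) ≠ 0) :
    fundMat (a x) (bv x) (gv x) Ψ y *ᵥ symmVec a bv gv Ψ x y =
      (1 / 2 : ℝ) •
        ((Ds Ψ (sVar (a x) (bv x) y) (sVar (a x) (gv x) y) * RF a bv gv Ψ bv x y
            + Dt Ψ (sVar (a x) (bv x) y) (sVar (a x) (gv x) y) * RF a bv gv Ψ gv x y) •
            pd (Fm (a x) (bv x) (gv x) Ψ) y
          + Ψ (sVar (a x) (bv x) y) (sVar (a x) (gv x) y) •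
            hessCov Ψ (sVar (a x) (bv x) y) (sVar (a x) (gv x) y)
              (RF a bv gv Ψ bv x y) (RF a bv gv Ψ gv x y)
              (hl (a x) (bv x) y) (hl (a x) (gv x) y)) := by
  rw [symmVec, mulVec_smul, fundMat_mulVec_frameVec hsymm hd hy hΨ hΨ0 hPi, smul_smul,
    one_div_mul_eq_div, div_mul_cancel_right₀ hΓ, one_div]

theorem geodesicCovec_fundMat_eq_mulVec (hsymm : ∀ᶠ z in 𝓝 x, (a z).IsSymm)
    (hd : IsUnit (a x).det) (ha : ∀ i j, DifferentiableAt ℝ (fun z => a z i j) x)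
    (hb : ∀ i, DifferentiableAt ℝ (fun z => bv z i) x)
    (hg : ∀ i, DifferentiableAt ℝ (fun z => gv z i) x) (hy : 0 < alph (a x) y)
    (hΨ : ContDiffAt ℝ 3 (uncurry Ψ) (sVar (a x) (bv x) y, sVar (a x) (gv x) y))
    (hΨ0 : Ψ (sVar (a x) (bv x) y) (sVar (a x) (gv x) y) ≠ 0)
    (hPi : PiF Ψ (sVar (a x) (bv x) y) (sVar (a x) (gv x) y) ≠ 0)
    (hΓ : GammaF Ψ (quadInv (a x) (bv x) (bv x)) (quadInv (a x) (gv x) (gv x))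
      (quadInv (a x) (bv x) (gv x)) (sVar (a x) (bv x) y) (sVar (a x) (gv x) y) ≠ 0) :
    geodesicCovec (fun z => fundMat (a z) (bv z) (gv z) Ψ y) x y =
      (4 : ℝ) • fundMat (a x) (bv x) (gv x) Ψ y *ᵥ
        (alphaG a x y + skewVec a bv gv Ψ x y + symmVec a bv gv Ψ x y) := by
  have hΨ₁ := hΨ.differentiableAt three_ne_zero
  rw [geodesicCovec_fundMat_eq hsymm hd ha hb hg hy hΨ, mulVec_add, mulVec_add,
    fundMat_mulVec_skewVec hsymm.self_of_nhds hd hy hΨ₁ hPi,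
    fundMat_mulVec_symmVec hsymm.self_of_nhds hd hy hΨ₁ hΨ0 hPi hΓ]
  ext i
  simp only [hessCov, Pi.add_apply, Pi.smul_apply, smul_eq_mul]
  ring

theorem statement12_general (hsymm : ∀ᶠ z in 𝓝 x, (a z).IsSymm) (hd : IsUnit (a x).det)
    (ha : ∀ i j, DifferentiableAt ℝ (fun z => a z i j) x)
    (hb : ∀ i, DifferentiableAt ℝ (fun z => bv z i) x)
    (hg : ∀ i, DifferentiableAt ℝ (fun z => gv z i) x) (hy : 0 < alph (a x) y)
    (hΨ : ContDiffAt ℝ 3 (uncurry Ψ) (sVar (a x) (bv x) y, sVar (a x) (gv x) y))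
    (hΨ0 : Ψ (sVar (a x) (bv x) y) (sVar (a x) (gv x) y) ≠ 0)
    (hPi : PiF Ψ (sVar (a x) (bv x) y) (sVar (a x) (gv x) y) ≠ 0)
    (hΓ : GammaF Ψ (quadInv (a x) (bv x) (bv x)) (quadInv (a x) (gv x) (gv x))
      (quadInv (a x) (bv x) (gv x)) (sVar (a x) (bv x) y) (sVar (a x) (gv x) y) ≠ 0) :
    sprayF (fun z w => Fm (a z) (bv z) (gv z) Ψ w) x y
      = alphaG a x y + skewVec a bv gv Ψ x y + symmVec a bv gv Ψ x y := by
  have hgmat := gmatF_Fm_eventuallyEq hsymm ha hb hg hy (hΨ.of_le (m := 2) (by norm_num))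
  have hgmat_x : gmatF (fun z w => Fm (a z) (bv z) (gv z) Ψ w) x y =
      fundMat (a x) (bv x) (gv x) Ψ y := hgmat.self_of_nhds
  have hdet := isUnit_det_fundMat hsymm.self_of_nhds hd hy (hΨ.differentiableAt three_ne_zero)
    hΨ0 hPi hΓ
  have hspray : sprayF (fun z w => Fm (a z) (bv z) (gv z) Ψ w) x y =
      (1 / 4 : ℝ) • (gmatF (fun z w => Fm (a z) (bv z) (gv z) Ψ w) x y)⁻¹ *ᵥ
        geodesicCovec (fun z => gmatF (fun z w => Fm (a z) (bv z) (gv z) Ψ w) z y) x y := rfl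
  rw [hspray, geodesicCovec_congr hgmat, hgmat_x,
    geodesicCovec_fundMat_eq_mulVec hsymm hd ha hb hg hy hΨ hΨ0 hPi hΓ, mulVec_smul,
    inv_mulVec_mulVec hdet, smul_smul]
  norm_num

end FinslerSpray

section PositiveDefinite

variable {n : ℕ} {a : Matrix (Fin n) (Fin n) ℝ} {v y : Fin n → ℝ}

theorem isSymm_of_posDef (ha : a.PosDef) : a.IsSymm :=
  Matrix.ext fun i j => ha.isHermitian.apply i j

theorem alph_pos_of_posDef (ha : a.PosDef) (hy : y ≠ 0) : 0 < alph a y := by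
  refine Real.sqrt_pos.mpr ((ha.dotProduct_mulVec_pos hy).trans_eq ?_)
  simp only [star_trivial, dotProduct, mulVec, Finset.mul_sum]
  exact Finset.sum_congr rfl fun i _ => Finset.sum_congr rfl fun j _ => by ring

theorem sq_sVar_le_quadInv (ha : a.PosDef) (hy : y ≠ 0) : sVar a v y ^ 2 ≤ quadInv a v v := by
  have hsymm := isSymm_of_posDef ha
  have hd : IsUnit a.det := a.isUnit_iff_isUnit_det.mp ha.isUnit
  have hα := alph_pos_of_posDef ha hy
  have hs : sVar a (hl a v y) y = 0 :=
    div_eq_zero_iff.mpr (Or.inl (hl_dotProduct_self hsymm hα))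
  have hlen : (a⁻¹ *ᵥ hl a v y) ⬝ᵥ a *ᵥ a⁻¹ *ᵥ hl a v y
      = quadInv a v v - sVar a v y * sVar a v y := by
    rw [mulVec_inv_mulVec hd, dotProduct_comm, hl_dotProduct_inv_mulVec hsymm hd hα,
      quadInv_comm hsymm, ← dotProduct_inv_mulVec, hl_dotProduct_inv_mulVec hsymm hd hα, hs,
      mul_zero, sub_zero]
  have hnonneg : 0 ≤ (a⁻¹ *ᵥ hl a v y) ⬝ᵥ a *ᵥ a⁻¹ *ᵥ hl a v y :=
    ha.posSemidef.dotProduct_mulVec_nonneg _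
  linarith [sq (sVar a v y)]

theorem sVar_mem_Ioo (ha : a.PosDef) (hy : y ≠ 0) {r : ℝ} (hr : √(quadInv a v v) < r) :
    sVar a v y ∈ Ioo (-r) r :=
  abs_lt.mp ((Real.abs_le_sqrt (sq_sVar_le_quadInv ha hy)).trans_lt hr)

end PositiveDefinite

end Development

/-- spray coefficients of the (α,β,γ)-metric in terms of those of `α`. -/
theorem statement12
    (n : ℕ) (hn : 2 ≤ n)
    (U : Set (Fin n → ℝ)) (hU : IsOpen U)
    (a : (Fin n → ℝ) → Matrix (Fin n) (Fin n) ℝ)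
    (haS : ∀ i j, ContDiffOn ℝ (⊤ : ℕ∞) (fun x => a x i j) U)
    (haP : ∀ x ∈ U, (a x).PosDef)
    (bv gv : (Fin n → ℝ) → Fin n → ℝ)
    (hbS : ∀ i, ContDiffOn ℝ (⊤ : ℕ∞) (fun x => bv x i) U)
    (hgS : ∀ i, ContDiffOn ℝ (⊤ : ℕ∞) (fun x => gv x i) U)
    (b₀ g₀ : ℝ) (hb₀ : 0 < b₀) (hg₀ : 0 < g₀)
    (hb : ∀ x ∈ U, Real.sqrt (quadInv (a x) (bv x) (bv x)) < b₀)
    (hg : ∀ x ∈ U, Real.sqrt (quadInv (a x) (gv x) (gv x)) < g₀)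
    (Ψ : ℝ → ℝ → ℝ)
    (hΨ : ContDiffOn ℝ (⊤ : ℕ∞) (fun p : ℝ × ℝ => Ψ p.1 p.2)
      (Set.Ioo (-b₀) b₀ ×ˢ Set.Ioo (-g₀) g₀))
    (hΨpos : ∀ p ∈ Set.Ioo (-b₀) b₀ ×ˢ Set.Ioo (-g₀) g₀, 0 < Ψ p.1 p.2)
    (hPipos : ∀ x ∈ U, ∀ y : Fin n → ℝ, y ≠ 0 →
      0 < PiF Ψ (sVar (a x) (bv x) y) (sVar (a x) (gv x) y))
    (hΓpos : ∀ x ∈ U, ∀ y : Fin n → ℝ, y ≠ 0 →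
      0 < GammaF Ψ (quadInv (a x) (bv x) (bv x)) (quadInv (a x) (gv x) (gv x))
          (quadInv (a x) (bv x) (gv x)) (sVar (a x) (bv x) y) (sVar (a x) (gv x) y))
 :
    ∀ x ∈ U, ∀ y : Fin n → ℝ, y ≠ 0 →
      ∀ p q Bq Gq Θq Rb Rg : ℝ,
        p = sVar (a x) (bv x) y → q = sVar (a x) (gv x) y →
        Bq = quadInv (a x) (bv x) (bv x) → Gq = quadInv (a x) (gv x) (gv x) →
        Θq = quadInv (a x) (bv x) (gv x) →
        Rb = r00 a bv x y - (2 * alph (a x) y / PiF Ψ p q) *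
            (Ds Ψ p q * contrS a bv bv x y + Dt Ψ p q * contrS a gv bv x y) →
        Rg = r00 a gv x y - (2 * alph (a x) y / PiF Ψ p q) *
            (Ds Ψ p q * contrS a bv gv x y + Dt Ψ p q * contrS a gv gv x y) →
        ∀ i, sprayF (fun z w => Fm (a z) (bv z) (gv z) Ψ w) x y i =
          alphaG a x y i
            + (alph (a x) y / PiF Ψ p q) *
                (Ds Ψ p q * sUp0 a bv x y i + Dt Ψ p q * sUp0 a gv x y i)
            + (1 / (2 * GammaF Ψ Bq Gq Θq p q)) *
                (((Ds (Ds Ψ) p q + (Gq - q ^ 2) * JF Ψ p q) * Rb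
                      + (Dt (Ds Ψ) p q - (Θq - p * q) * JF Ψ p q) * Rg)
                    * (∑ l, (a x)⁻¹ i l * bv x l)
                  + ((Dt (Dt Ψ) p q + (Bq - p ^ 2) * JF Ψ p q) * Rg
                      + (Dt (Ds Ψ) p q - (Θq - p * q) * JF Ψ p q) * Rb)
                    * (∑ l, (a x)⁻¹ i l * gv x l)
                  + (1 / Ψ p q) *
                      ((rho1F Ψ p q + pi2F Ψ p q * (Θq - p * q)
                            - pi1F Ψ p q * (Gq - q ^ 2)) * Rb
                        + (rhobar1F Ψ p q - pi2F Ψ p q * (Bq - p ^ 2)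
                            + pi1F Ψ p q * (Θq - p * q)) * Rg)
                    * (y i / alph (a x) y)) := by
  rintro x hx y hy _ _ _ _ _ _ _ rfl rfl rfl rfl rfl rfl rfl i
  have hmem : (sVar (a x) (bv x) y, sVar (a x) (gv x) y) ∈ Ioo (-b₀) b₀ ×ˢ Ioo (-g₀) g₀ :=
    ⟨sVar_mem_Ioo (haP x hx) hy (hb x hx), sVar_mem_Ioo (haP x hx) hy (hg x hx)⟩
  have hsymm : ∀ᶠ z in nhds x, (a z).IsSymm :=
    (hU.eventually_mem hx).mono fun z hz => isSymm_of_posDef (haP z hz)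
  have hdiff {f : (Fin n → ℝ) → ℝ} (hf : ContDiffOn ℝ (⊤ : ℕ∞) f U) : DifferentiableAt ℝ f x :=
    (hf.contDiffAt (hU.mem_nhds hx)).differentiableAt (by simp)
  have hΨ₃ := (hΨ.contDiffAt ((isOpen_Ioo.prod isOpen_Ioo).mem_nhds hmem)).of_le (m := 3)
    (WithTop.coe_le_coe.mpr le_top)
  have hspray := statement12_general hsymm ((a x).isUnit_iff_isUnit_det.mp (haP x hx).isUnit)
    (fun i j => hdiff (haS i j)) (fun i => hdiff (hbS i)) (fun i => hdiff (hgS i))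
    (alph_pos_of_posDef (haP x hx) hy) hΨ₃ (hΨpos _ hmem).ne' (hPipos x hx y hy).ne'
    (hΓpos x hx y hy).ne'
  rw [hspray]
  simp only [skewVec, symmVec, frameVec, RF, Gamma1F, Gamma2F, Gamma3F, Pi.add_apply,
    Pi.smul_apply, smul_eq_mul, Matrix.mulVec, dotProduct, div_eq_inv_mul (y i)]
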